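/- Let a, b be two distinct points in the closed unit ball of ℂ². Let f be a real-analytic function on the unit sphere ∂B². Suppose that for every complex line L containing a or b there exists a function F_L continuous on L ∩ cl(B²), holomorphic in L ∩ B², with f = F_L on L ∩ ∂B². Then f ∈ A(∂B²). -/

import Mathlib

open Metric Set

/-!
A function that extends from the circles cut out by the lines through a point `(p, 0)` has vanishing
moments along them. Differentiating these moments in the slope of the line at slope zero shows that
every jet of `f` transverse to the circle `{(z, 0) : |z| = 1}` is, up to polynomial factors that
vanish only at `0`, `p` or `p⁻¹`, orthogonal to the polynomials on that circle. The points `0` and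
`p ≠ 0` give coprime factors; for a single point with `p = 1` the factor is a power of `z - 1`,
which the Riemann–Lebesgue lemma removes. So all jets are themselves orthogonal to the polynomials.

Consequently the component of `f` of degree `d` under `z ↦ ζ z`, read in the chart `z₂ / z₁`, is a
real-analytic function annihilated by `∂ ^ (d + 1)`: it vanishes for `d < 0`, and for `d ≥ 0` the
same behaviour in the chart `z₁ / z₂` and Liouville's theorem make it a polynomial of degree at most
`d`. The components are therefore homogeneous holomorphic polynomials, and their sum, which
converges uniformly because `f` is smooth, is the extension. A ball involution and a unitary map
bring two points of the closed ball, one of them interior, into the position `0`, `(p, 0)`, and a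
single boundary point into the position `(1, 0)`.
-/

section Derivatives

variable {E F : Type*} [NormedAddCommGroup E] [NormedSpace ℝ E]
  [NormedAddCommGroup F] [NormedSpace ℝ F]

theorem fderiv_fderiv_apply_comm {f : E → F} {x : E} (hf : ContDiffAt ℝ 2 f x) (v w : E) :
    fderiv ℝ (fun y => fderiv ℝ f y v) x w = fderiv ℝ (fun y => fderiv ℝ f y w) x v := by
  have hf' : DifferentiableAt ℝ (fderiv ℝ f) x :=
    (hf.fderiv_right (m := 1) (by norm_num)).differentiableAt one_ne_zero
  have hf'' (v w : E) : fderiv ℝ (fun y => fderiv ℝ f y v) x w = fderiv ℝ (fderiv ℝ f) x w v := by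
    rw [fderiv_clm_apply hf' (differentiableAt_const v)]
    simp
  rw [hf'', hf'', hf.isSymmSndFDerivAt (by simp)]

theorem fderiv_comp_prodMk_left {f : ℝ × E → F} {θ : ℝ} {x : E}
    (hf : DifferentiableAt ℝ f (θ, x)) (e : E) :
    fderiv ℝ (fun x => f (θ, x)) x e = fderiv ℝ f (θ, x) (0, e) := by
  have := (hf.hasFDerivAt.comp x (hasFDerivAt_prodMk_right θ x)).fderiv
  simpa [Function.comp_def] using DFunLike.congr_fun this e

theorem hasDerivAt_comp_prodMk_right {f : ℝ × E → F} {θ : ℝ} {x : E}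
    (hf : DifferentiableAt ℝ f (θ, x)) :
    HasDerivAt (fun θ => f (θ, x)) (fderiv ℝ f (θ, x) (1, 0)) θ :=
  hf.hasFDerivAt.comp_hasDerivAt θ ((hasDerivAt_id θ).prodMk (hasDerivAt_const θ x))

end Derivatives

section ParametricIntegral

open Filter MeasureTheory
open scoped ENNReal NNReal Topology ContDiff

theorem exists_nnnorm_changeOrigin_mul_pow_le {𝕜 E F : Type*} [NontriviallyNormedField 𝕜]
    [NormedAddCommGroup E] [NormedSpace 𝕜 E] [NormedAddCommGroup F] [NormedSpace 𝕜 F]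
    (p : FormalMultilinearSeries 𝕜 E F) {ρ : ℝ≥0} (hρ : (ρ : ℝ≥0∞) + ρ < p.radius) :
    ∃ C : ℝ≥0, ∀ x : E, ‖x‖₊ ≤ ρ → ∀ n, ‖p.changeOrigin x n‖₊ * ρ ^ n ≤ C := by
  have hsum := NNReal.summable_sigma.1 (p.changeOriginSeries_summable_aux₁ hρ)
  refine ⟨∑' k : ℕ, ∑' s : Σ l : ℕ, { s : Finset (Fin (k + l)) // s.card = l },
    ‖p (k + s.1)‖₊ * ρ ^ s.1 * ρ ^ k, fun x hx n => ?_⟩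
  have hx' : (‖x‖₊ : ℝ≥0∞) < p.radius :=
    (ENNReal.coe_le_coe.2 hx).trans_lt (le_self_add.trans_lt hρ)
  calc ‖p.changeOrigin x n‖₊ * ρ ^ n
      ≤ (∑' s : Σ l : ℕ, { s : Finset (Fin (n + l)) // s.card = l },
          ‖p (n + s.1)‖₊ * ‖x‖₊ ^ s.1) * ρ ^ n := by
        gcongr
        exact p.nnnorm_changeOrigin_le n hx'
    _ = ∑' s : Σ l : ℕ, { s : Finset (Fin (n + l)) // s.card = l },
          ‖p (n + s.1)‖₊ * ‖x‖₊ ^ s.1 * ρ ^ n := NNReal.tsum_mul_right _ _ |>.symm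
    _ ≤ ∑' s : Σ l : ℕ, { s : Finset (Fin (n + l)) // s.card = l },
          ‖p (n + s.1)‖₊ * ρ ^ s.1 * ρ ^ n :=
        Summable.tsum_le_tsum (fun s => by gcongr)
          ((p.changeOriginSeries_summable_aux₂ hx' n).mul_right _) (hsum.1 n)
    _ ≤ _ := hsum.2.le_tsum n fun _ _ => zero_le

variable {E F : Type*} [NormedAddCommGroup E] [NormedSpace ℝ E]
  [NormedAddCommGroup F] [NormedSpace ℝ F]

section Translates

variable {p : FormalMultilinearSeries ℝ E F} {ρ C : ℝ≥0} {k : ℝ → E} {c d : ℝ}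

theorem continuousOn_changeOrigin_comp [CompleteSpace F] (hρ : (ρ : ℝ≥0∞) < p.radius)
    (hk : ContinuousOn k (uIcc c d)) (hkρ : ∀ τ ∈ uIcc c d, ‖k τ‖₊ ≤ ρ) (n : ℕ) :
    ContinuousOn (fun τ => p.changeOrigin (k τ) n) (uIcc c d) :=
  (p.hasFPowerSeriesOnBall_changeOrigin n (bot_le.trans_lt hρ)).continuousOn.comp hk
    fun τ hτ => by
      rw [mem_eball_zero_iff]
      exact (ENNReal.coe_le_coe.2 (hkρ τ hτ)).trans_lt hρ

theorem le_radius_integral_changeOrigin (hρ : 0 < ρ)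
    (hC : ∀ τ ∈ uIcc c d, ∀ n, ‖p.changeOrigin (k τ) n‖₊ * ρ ^ n ≤ C) :
    (ρ : ℝ≥0∞) ≤
      FormalMultilinearSeries.radius fun n => ∫ τ in c..d, p.changeOrigin (k τ) n := by
  refine FormalMultilinearSeries.le_radius_of_bound _ (C * |d - c|) fun n => ?_
  calc ‖∫ τ in c..d, p.changeOrigin (k τ) n‖ * (ρ : ℝ) ^ n
      ≤ C / ρ ^ n * |d - c| * ρ ^ n := by
        gcongr
        refine intervalIntegral.norm_integral_le_of_norm_le_const fun τ hτ => ?_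
        rw [le_div_iff₀ (by positivity)]
        exact_mod_cast hC τ (uIoc_subset_uIcc hτ) n
    _ = C * |d - c| := by field_simp

theorem hasFPowerSeriesOnBall_integral_translates [CompleteSpace F] {Φ : E → F} {x₀ : E}
    {r : ℝ≥0∞} (hp : HasFPowerSeriesOnBall Φ p x₀ r) (hρ : 0 < ρ) (hρr : (ρ : ℝ≥0∞) + ρ < r)
    (hk : ContinuousOn k (uIcc c d)) (hkρ : ∀ τ ∈ uIcc c d, ‖k τ‖₊ ≤ ρ) :
    HasFPowerSeriesOnBall (fun x => ∫ τ in c..d, Φ (x + k τ))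
      (fun n => ∫ τ in c..d, p.changeOrigin (k τ) n) x₀ ρ := by
  obtain ⟨C, hC⟩ := exists_nnnorm_changeOrigin_mul_pow_le p (hρr.trans_le hp.r_le)
  replace hC := fun τ hτ => hC (k τ) (hkρ τ hτ)
  have hcont := continuousOn_changeOrigin_comp
    ((le_self_add.trans_lt hρr).trans_le hp.r_le) hk hkρ
  refine ⟨le_radius_integral_changeOrigin hρ hC, by exact_mod_cast hρ, fun {y} hy => ?_⟩
  have hyρ : ‖y‖ < ρ := by simpa using hy
  let evalY n := ContinuousMultilinearMap.apply ℝ (fun _ : Fin n => E) F fun _ => y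
  have eval_integral n : (∫ τ in c..d, p.changeOrigin (k τ) n) (fun _ => y) =
      ∫ τ in c..d, p.changeOrigin (k τ) n fun _ => y :=
    ((evalY n).intervalIntegral_comp_comm (hcont n).intervalIntegrable).symm
  simp only [eval_integral]
  refine intervalIntegral.hasSum_integral_of_dominated_convergence
    (fun n _ => C * (‖y‖ / ρ) ^ n) (fun n => ?_) (fun n => .of_forall fun τ hτ => ?_)
    (.of_forall fun τ _ => Summable.mul_left _ ?_) intervalIntegrable_const
    (.of_forall fun τ hτ => ?_)
  · exact ((evalY n).continuous.comp_continuousOn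
      ((hcont n).mono uIoc_subset_uIcc)).aestronglyMeasurable measurableSet_uIoc
  · have hCτ : ‖p.changeOrigin (k τ) n‖ * ρ ^ n ≤ C := by
      exact_mod_cast hC τ (uIoc_subset_uIcc hτ) n
    calc _ ≤ ‖p.changeOrigin (k τ) n‖ * ‖y‖ ^ n := by
          simpa using (p.changeOrigin (k τ) n).le_opNorm fun _ => y
      _ = ‖p.changeOrigin (k τ) n‖ * ρ ^ n * (‖y‖ / ρ) ^ n := by
          rw [div_pow]; field_simp
      _ ≤ _ := by gcongr
  · exact summable_geometric_of_lt_one (by positivity) ((div_lt_one (by positivity)).2 hyρ)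
  · have hkτ : (‖k τ‖₊ : ℝ≥0∞) ≤ ρ := ENNReal.coe_le_coe.2 (hkρ τ (uIoc_subset_uIcc hτ))
    have hsum := (hp.changeOrigin (hkτ.trans_lt (le_self_add.trans_lt hρr))).hasSum (y := y) <| by
      rw [mem_eball_zero_iff] at hy ⊢
      exact hy.trans (lt_tsub_iff_right.2 ((by gcongr : (ρ : ℝ≥0∞) + ‖k τ‖₊ ≤ ρ + ρ).trans_lt hρr))
    rwa [show x₀ + y + k τ = x₀ + k τ + y by abel]

end Translates

variable {Φ : ℝ × E → F}

theorem eventually_analyticAt_integral [CompleteSpace F] {θ₀ : ℝ} {x₀ : E}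
    (hΦ : AnalyticAt ℝ Φ (θ₀, x₀)) :
    ∀ᶠ c in 𝓝 θ₀, AnalyticAt ℝ (fun x => ∫ θ in θ₀..c, Φ (θ, x)) x₀ := by
  obtain ⟨p, r, hp⟩ := hΦ
  obtain ⟨R, hR, hRr⟩ := ENNReal.lt_iff_exists_nnreal_btwn.1 hp.r_pos
  have hρ : 0 < R / 2 := half_pos (by exact_mod_cast hR)
  have hρr : ((R / 2 : ℝ≥0) : ℝ≥0∞) + (R / 2 : ℝ≥0) < r := by
    rwa [← ENNReal.coe_add, add_halves]
  filter_upwards [ball_mem_nhds θ₀ (NNReal.coe_pos.2 hρ)] with c hc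
  have hk : ∀ θ ∈ uIcc θ₀ c, ‖((θ - θ₀, 0) : ℝ × E)‖₊ ≤ R / 2 := fun θ hθ => by
    have hdist : |θ - θ₀| ≤ |c - θ₀| := abs_sub_left_of_mem_uIcc hθ
    rw [← NNReal.coe_le_coe, coe_nnnorm, Prod.norm_mk, norm_zero, max_eq_left (norm_nonneg _)]
    exact hdist.trans (mem_ball_iff_norm.1 hc).le
  have hseries := hasFPowerSeriesOnBall_integral_translates hp hρ hρr
    (k := fun θ => ((θ - θ₀, 0) : ℝ × E)) (by fun_prop) hk
  have hslice : AnalyticAt ℝ (fun x : E => (θ₀, x)) x₀ := by fun_prop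
  simpa [Function.comp_def] using hseries.analyticAt.comp hslice

theorem contDiff_omega_integral [CompleteSpace F] (hΦ : ContDiff ℝ ω Φ) (a b : ℝ) :
    ContDiff ℝ ω fun x => ∫ θ in a..b, Φ (θ, x) := by
  rw [contDiff_omega_iff_analyticOnNhd] at hΦ ⊢
  intro x₀ _
  have hint (x : E) (c d : ℝ) : IntervalIntegrable (fun θ => Φ (θ, x)) volume c d :=
    (hΦ.continuousOn.comp_continuous (by fun_prop) fun _ => mem_univ _).intervalIntegrable c d
  have hconst : IsLocallyConstant fun c => AnalyticAt ℝ (fun x => ∫ θ in a..c, Φ (θ, x)) x₀ := by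
    refine (IsLocallyConstant.iff_eventually_eq _).2 fun θ₀ => ?_
    filter_upwards [eventually_analyticAt_integral (hΦ (θ₀, x₀) (mem_univ _))] with c hc
    refine propext ⟨fun h => ?_, fun h => ?_⟩
    · convert h.sub hc using 2 with x
      exact eq_sub_of_add_eq
        (intervalIntegral.integral_add_adjacent_intervals (hint x _ _) (hint x _ _))
    · convert h.add hc using 2 with x
      exact (intervalIntegral.integral_add_adjacent_intervals (hint x _ _) (hint x _ _)).symm
  rw [hconst.apply_eq_of_preconnectedSpace b a]
  simp only [intervalIntegral.integral_same]
  exact analyticAt_const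

theorem hasFDerivAt_integral_of_contDiff [ProperSpace E] (hΦ : ContDiff ℝ 1 Φ) (a b : ℝ) (x₀ : E) :
    HasFDerivAt (fun x => ∫ θ in a..b, Φ (θ, x))
      (∫ θ in a..b, (fderiv ℝ Φ (θ, x₀)).comp (ContinuousLinearMap.inr ℝ ℝ E)) x₀ := by
  have hΦ' : Continuous fun y : ℝ × E => (fderiv ℝ Φ y).comp (ContinuousLinearMap.inr ℝ ℝ E) :=
    (hΦ.continuous_fderiv one_ne_zero).clm_comp continuous_const
  have hΦ'_slice (x : E) := hΦ'.comp (by fun_prop : Continuous fun θ : ℝ => (θ, x))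
  have hΦ_slice (x : E) := hΦ.continuous.comp (by fun_prop : Continuous fun θ : ℝ => (θ, x))
  obtain ⟨C, hC⟩ := ((isCompact_uIcc (a := a) (b := b)).prod
    (isCompact_closedBall x₀ 1)).exists_bound_of_continuousOn hΦ'.continuousOn
  exact intervalIntegral.hasFDerivAt_integral_of_dominated_of_fderiv_le
    (F' := fun x θ => (fderiv ℝ Φ (θ, x)).comp (ContinuousLinearMap.inr ℝ ℝ E))
    (bound := fun _ => C) (ball_mem_nhds x₀ one_pos)
    (.of_forall fun x => (hΦ_slice x).aestronglyMeasurable)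
    ((hΦ_slice x₀).intervalIntegrable a b)
    (hΦ'_slice x₀).aestronglyMeasurable
    (.of_forall fun θ hθ x hx => hC (θ, x) ⟨uIoc_subset_uIcc hθ, ball_subset_closedBall hx⟩)
    intervalIntegrable_const
    (.of_forall fun θ _ x _ => ((hΦ.differentiable one_ne_zero (θ, x)).hasFDerivAt.comp x
      (hasFDerivAt_prodMk_right θ x)))

theorem fderiv_integral_apply [CompleteSpace F] [ProperSpace E] (hΦ : ContDiff ℝ 1 Φ)
    (a b : ℝ) (x e : E) :
    fderiv ℝ (fun x => ∫ θ in a..b, Φ (θ, x)) x e = ∫ θ in a..b, fderiv ℝ Φ (θ, x) (0, e) := by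
  rw [(hasFDerivAt_integral_of_contDiff hΦ a b x).fderiv,
    ContinuousLinearMap.intervalIntegral_apply]
  · simp
  · exact (((hΦ.continuous_fderiv one_ne_zero).comp (by fun_prop)).clm_comp
      continuous_const).intervalIntegrable a b

theorem fderiv_integral_mul_fderiv [ProperSpace E] {Φ z : ℝ × E → ℂ} (hΦ : ContDiff ℝ 1 Φ)
    (hz : ContDiff ℝ 2 z) {a b : ℝ} (hΦab : ∀ x, Φ (a, x) = Φ (b, x))
    (hzab : ∀ x, z (a, x) = z (b, x)) (x e : E) :
    fderiv ℝ (fun x => ∫ θ in a..b, Φ (θ, x) * fderiv ℝ z (θ, x) (1, 0)) x e =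
      ∫ θ in a..b, (fderiv ℝ Φ (θ, x) (0, e) * fderiv ℝ z (θ, x) (1, 0) -
        fderiv ℝ Φ (θ, x) (1, 0) * fderiv ℝ z (θ, x) (0, e)) := by
  have hz' (v : ℝ × E) : ContDiff ℝ 1 fun y => fderiv ℝ z y v :=
    (hz.fderiv_right (by norm_num)).clm_apply contDiff_const
  have cont_z' (v : ℝ × E) : Continuous fun θ => fderiv ℝ z (θ, x) v :=
    (hz' v).continuous.comp (by fun_prop)
  have cont_fderiv {g : ℝ × E → ℂ} (hg : ContDiff ℝ 1 g) (v : ℝ × E) :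
      Continuous fun θ => fderiv ℝ g (θ, x) v :=
    ((hg.continuous_fderiv one_ne_zero).clm_apply continuous_const).comp (by fun_prop)
  have cont_Φ : Continuous fun θ => Φ (θ, x) := hΦ.continuous.comp (by fun_prop)
  have endpoints : fderiv ℝ z (a, x) (0, e) = fderiv ℝ z (b, x) (0, e) := by
    simp only [← fderiv_comp_prodMk_left (hz.differentiable two_ne_zero _), hzab]
  have by_parts : ∫ θ in a..b, Φ (θ, x) * fderiv ℝ (fun y => fderiv ℝ z y (1, 0)) (θ, x) (0, e) =
      -∫ θ in a..b, fderiv ℝ Φ (θ, x) (1, 0) * fderiv ℝ z (θ, x) (0, e) := by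
    simp only [fderiv_fderiv_apply_comm hz.contDiffAt _ (0, e)]
    rw [intervalIntegral.integral_mul_deriv_eq_deriv_mul
      (fun θ _ => hasDerivAt_comp_prodMk_right (hΦ.differentiable one_ne_zero _))
      (fun θ _ => hasDerivAt_comp_prodMk_right ((hz' (0, e)).differentiable one_ne_zero _))
      ((cont_fderiv hΦ _).intervalIntegrable a b)
      ((cont_fderiv (hz' _) _).intervalIntegrable a b), hΦab, endpoints]
    ring
  have product_rule (θ : ℝ) :
      fderiv ℝ (fun y => Φ y * fderiv ℝ z y (1, 0)) (θ, x) (0, e) =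
        fderiv ℝ Φ (θ, x) (0, e) * fderiv ℝ z (θ, x) (1, 0) +
          Φ (θ, x) * fderiv ℝ (fun y => fderiv ℝ z y (1, 0)) (θ, x) (0, e) := by
    rw [fderiv_fun_mul (hΦ.differentiable one_ne_zero _)
      ((hz' _).differentiable one_ne_zero _)]
    simp only [add_apply, smul_apply, smul_eq_mul]
    ring
  rw [fderiv_integral_apply (hΦ.mul (hz' (1, 0))), intervalIntegral.integral_congr
    fun θ _ => product_rule θ, intervalIntegral.integral_add, by_parts,
    intervalIntegral.integral_sub, sub_eq_add_neg]
  · exact ((cont_fderiv hΦ _).mul (cont_z' _)).intervalIntegrable a b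
  · exact ((cont_fderiv hΦ _).mul (cont_z' _)).intervalIntegrable a b
  · exact ((cont_fderiv hΦ _).mul (cont_z' _)).intervalIntegrable a b
  · exact (cont_Φ.mul (cont_fderiv (hz' _) _)).intervalIntegrable a b

end ParametricIntegral

section Wirtinger

open scoped ContDiff ComplexConjugate Topology

variable {V : Type*} [NormedAddCommGroup V] [NormedSpace ℂ V]

/-- The Wirtinger derivative `∂f/∂v` in the complex direction `v`, i.e. the complex-linear part of
`c ↦ df(c v)`. -/
noncomputable def delAlong (v : V) (f : V → ℂ) (z : V) : ℂ :=
  1 / 2 * (fderiv ℝ f z v - Complex.I * fderiv ℝ f z (Complex.I • v))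

/-- The conjugate Wirtinger derivative `∂f/∂v̄` in the complex direction `v`, i.e. the
conjugate-linear part of `c ↦ df(c v)`. -/
noncomputable def delBarAlong (v : V) (f : V → ℂ) (z : V) : ℂ :=
  1 / 2 * (fderiv ℝ f z v + Complex.I * fderiv ℝ f z (Complex.I • v))

variable {f g : V → ℂ} {z : V}

theorem fderiv_smul_eq_delAlong_add_delBarAlong (f : V → ℂ) (z v : V) (c : ℂ) :
    fderiv ℝ f z (c • v) = c * delAlong v f z + conj c * delBarAlong v f z := by
  have hc : c • v = c.re • v + c.im • Complex.I • v := by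
    rw [← Complex.coe_smul c.re, ← Complex.coe_smul c.im, smul_smul, ← add_smul,
      Complex.re_add_im]
  have hconj : conj c = c.re - c.im * Complex.I := by apply Complex.ext <;> simp
  rw [hc, map_add, map_smul, map_smul, hconj, delAlong, delBarAlong, Complex.real_smul,
    Complex.real_smul]
  nth_rw 3 [← Complex.re_add_im c]
  linear_combination c.im * fderiv ℝ f z (Complex.I • v) * Complex.I_sq

theorem delAlong_eq_of_fderiv_smul {v : V} {a b : ℂ}
    (h : ∀ c : ℂ, fderiv ℝ f z (c • v) = c * a + conj c * b) : delAlong v f z = a := by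
  have h₁ := h 1
  rw [one_smul, map_one] at h₁
  rw [delAlong, h₁, h, Complex.conj_I]
  linear_combination (-1 / 2 * a + 1 / 2 * b) * Complex.I_sq

theorem delBarAlong_eq_of_fderiv_smul {v : V} {a b : ℂ}
    (h : ∀ c : ℂ, fderiv ℝ f z (c • v) = c * a + conj c * b) : delBarAlong v f z = b := by
  have h₁ := h 1
  rw [one_smul, map_one] at h₁
  rw [delBarAlong, h₁, h, Complex.conj_I]
  linear_combination (1 / 2 * a - 1 / 2 * b) * Complex.I_sq

theorem analyticAt_fderiv_apply (hf : AnalyticAt ℝ f z) (v : V) :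
    AnalyticAt ℝ (fun z => fderiv ℝ f z v) z :=
  ((ContinuousLinearMap.apply ℝ ℂ v).analyticAt _).comp hf.fderiv

theorem analyticAt_delAlong (hf : AnalyticAt ℝ f z) (v : V) : AnalyticAt ℝ (delAlong v f) z :=
  analyticAt_const.mul ((analyticAt_fderiv_apply hf _).sub
    (analyticAt_const.mul (analyticAt_fderiv_apply hf _)))

theorem analyticAt_delBarAlong (hf : AnalyticAt ℝ f z) (v : V) :
    AnalyticAt ℝ (delBarAlong v f) z :=
  analyticAt_const.mul ((analyticAt_fderiv_apply hf _).add
    (analyticAt_const.mul (analyticAt_fderiv_apply hf _)))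

theorem contDiff_delAlong (hf : ContDiff ℝ ω f) (v : V) : ContDiff ℝ ω (delAlong v f) :=
  contDiff_omega_iff_analyticOnNhd.2 fun z _ =>
    analyticAt_delAlong (contDiff_omega_iff_analyticOnNhd.1 hf z (mem_univ z)) v

theorem contDiff_delBarAlong (hf : ContDiff ℝ ω f) (v : V) : ContDiff ℝ ω (delBarAlong v f) :=
  contDiff_omega_iff_analyticOnNhd.2 fun z _ =>
    analyticAt_delBarAlong (contDiff_omega_iff_analyticOnNhd.1 hf z (mem_univ z)) v

theorem contDiff_iterate_delAlong (hf : ContDiff ℝ ω f) (v : V) (n : ℕ) :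
    ContDiff ℝ ω ((delAlong v)^[n] f) :=
  Function.Iterate.rec (ContDiff ℝ ω) hf (fun _ h => contDiff_delAlong h v) n

theorem contDiff_iterate_delBarAlong (hf : ContDiff ℝ ω f) (v : V) (n : ℕ) :
    ContDiff ℝ ω ((delBarAlong v)^[n] f) :=
  Function.Iterate.rec (ContDiff ℝ ω) hf (fun _ h => contDiff_delBarAlong h v) n

theorem delAlong_add (hf : DifferentiableAt ℝ f z) (hg : DifferentiableAt ℝ g z) (v : V) :
    delAlong v (fun z => f z + g z) z = delAlong v f z + delAlong v g z := by
  simp only [delAlong, fderiv_fun_add hf hg, add_apply]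
  ring

theorem delAlong_sub (hf : DifferentiableAt ℝ f z) (hg : DifferentiableAt ℝ g z) (v : V) :
    delAlong v (fun z => f z - g z) z = delAlong v f z - delAlong v g z := by
  simp only [delAlong, fderiv_fun_sub hf hg, sub_apply]
  ring

theorem delAlong_mul (hf : DifferentiableAt ℝ f z) (hg : DifferentiableAt ℝ g z) (v : V) :
    delAlong v (fun z => f z * g z) z = f z * delAlong v g z + g z * delAlong v f z := by
  simp only [delAlong, fderiv_fun_mul hf hg, add_apply, smul_apply, smul_eq_mul]
  ring

theorem delBarAlong_mul (hf : DifferentiableAt ℝ f z) (hg : DifferentiableAt ℝ g z) (v : V) :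
    delBarAlong v (fun z => f z * g z) z = f z * delBarAlong v g z + g z * delBarAlong v f z := by
  simp only [delBarAlong, fderiv_fun_mul hf hg, add_apply, smul_apply, smul_eq_mul]
  ring

theorem delAlong_eq_fderiv (hf : DifferentiableAt ℂ f z) (v : V) :
    delAlong v f z = fderiv ℂ f z v :=
  delAlong_eq_of_fderiv_smul (b := 0) fun c => by simp [hf.fderiv_restrictScalars ℝ]

theorem delBarAlong_eq_zero (hf : DifferentiableAt ℂ f z) (v : V) : delBarAlong v f z = 0 :=
  delBarAlong_eq_of_fderiv_smul (a := fderiv ℂ f z v) fun c => by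
    simp [hf.fderiv_restrictScalars ℝ]

theorem fderiv_conj_apply (hf : DifferentiableAt ℝ f z) (v : V) :
    fderiv ℝ (fun z => conj (f z)) z v = conj (fderiv ℝ f z v) :=
  DFunLike.congr_fun (Complex.conjCLE.toContinuousLinearMap.hasFDerivAt.comp z
    hf.hasFDerivAt).fderiv v

theorem delBarAlong_conj (hf : DifferentiableAt ℝ f z) (v : V) :
    delBarAlong v (fun z => conj (f z)) z = conj (delAlong v f z) := by
  simp [delBarAlong, delAlong, fderiv_conj_apply hf, Complex.conj_ofNat]

theorem delAlong_delBarAlong_comm (hf : ContDiffAt ℝ ω f z) (v w : V) :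
    delAlong v (delBarAlong w f) z = delBarAlong w (delAlong v f) z := by
  have hdiff (u : V) : DifferentiableAt ℝ (fun z => fderiv ℝ f z u) z :=
    (analyticAt_fderiv_apply hf.analyticAt u).differentiableAt
  have fderiv_delBar (u : V) : fderiv ℝ (delBarAlong w f) z u =
      1 / 2 * (fderiv ℝ (fun z => fderiv ℝ f z w) z u +
        Complex.I * fderiv ℝ (fun z => fderiv ℝ f z (Complex.I • w)) z u) := by
    have := (((hdiff w).hasFDerivAt.add
      ((hdiff (Complex.I • w)).hasFDerivAt.const_mul Complex.I)).const_mul (1 / 2)).fderiv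
    exact DFunLike.congr_fun this u
  have fderiv_del (u : V) : fderiv ℝ (delAlong v f) z u =
      1 / 2 * (fderiv ℝ (fun z => fderiv ℝ f z v) z u -
        Complex.I * fderiv ℝ (fun z => fderiv ℝ f z (Complex.I • v)) z u) := by
    have := (((hdiff v).hasFDerivAt.sub
      ((hdiff (Complex.I • v)).hasFDerivAt.const_mul Complex.I)).const_mul (1 / 2)).fderiv
    exact DFunLike.congr_fun this u
  have hf₂ : ContDiffAt ℝ 2 f z := hf.of_le (by simp)
  rw [delAlong, delBarAlong, fderiv_delBar, fderiv_delBar, fderiv_del, fderiv_del,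
    fderiv_fderiv_apply_comm hf₂ w v, fderiv_fderiv_apply_comm hf₂ (Complex.I • w) v,
    fderiv_fderiv_apply_comm hf₂ w, fderiv_fderiv_apply_comm hf₂ (Complex.I • w)]
  ring

theorem iterate_delBarAlong_delAlong (hf : ContDiff ℝ ω f) (v w : V) (n : ℕ) :
    (delBarAlong w)^[n] (delAlong v f) = delAlong v ((delBarAlong w)^[n] f) := by
  induction n with
  | zero => rfl
  | succ n ih =>
    rw [Function.iterate_succ_apply', ih, Function.iterate_succ_apply']
    exact funext fun z => (delAlong_delBarAlong_comm
      (contDiff_iterate_delBarAlong hf w n).contDiffAt v w).symm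

theorem iterate_delBarAlong_iterate_delAlong (hf : ContDiff ℝ ω f) (v w : V) (n k : ℕ) :
    (delBarAlong w)^[n] ((delAlong v)^[k] f) = (delAlong v)^[k] ((delBarAlong w)^[n] f) := by
  induction k with
  | zero => rfl
  | succ k ih =>
    rw [Function.iterate_succ_apply', iterate_delBarAlong_delAlong
      (contDiff_iterate_delAlong hf v k), ih, Function.iterate_succ_apply']

end Wirtinger

section PlaneFunctions

open Filter Finset
open scoped ContDiff ComplexConjugate Topology

theorem differentiableAt_of_delBarAlong_eq_zero {f : ℂ → ℂ} {z : ℂ} (hf : DifferentiableAt ℝ f z)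
    (h : delBarAlong 1 f z = 0) : DifferentiableAt ℂ f z := by
  refine differentiableAt_complex_iff_differentiableAt_real.2 ⟨hf, ?_⟩
  simp only [delBarAlong, smul_eq_mul, mul_one] at h ⊢
  linear_combination 2 * -Complex.I * h + fderiv ℝ f z Complex.I * Complex.I_sq

theorem iteratedDeriv_line_eq_zero {f : ℂ → ℂ} (hf : ContDiff ℝ ω f)
    (hjet : ∀ l n, (delAlong 1)^[l] ((delBarAlong 1)^[n] f) 0 = 0) (z : ℂ) (k : ℕ) :
    iteratedDeriv k (fun t : ℝ => f (t • z)) 0 = 0 := by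
  induction k generalizing f with
  | zero => simpa using hjet 0 0
  | succ k ih =>
    have hline : ContDiff ℝ ω fun t : ℝ => t • z := by fun_prop
    have hderiv : deriv (fun t : ℝ => f (t • z)) =
        fun t => z * delAlong 1 f (t • z) + conj z * delBarAlong 1 f (t • z) := by
      funext t
      have hf' := (hf.differentiable (by simp) (t • z)).hasFDerivAt
      have := hf'.comp_hasDerivAt t ((hasDerivAt_id t).smul_const z)
      rw [← fderiv_smul_eq_delAlong_add_delBarAlong]
      simpa [Function.comp_def] using this.deriv
    have hdel : ContDiff ℝ k fun t : ℝ => delAlong 1 f (t • z) :=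
      ((contDiff_delAlong hf 1).comp hline).of_le (by simp)
    have hdelBar : ContDiff ℝ k fun t : ℝ => delBarAlong 1 f (t • z) :=
      ((contDiff_delBarAlong hf 1).comp hline).of_le (by simp)
    rw [iteratedDeriv_succ', hderiv, iteratedDeriv_fun_add
      (contDiff_const.mul hdel).contDiffAt (contDiff_const.mul hdelBar).contDiffAt,
      iteratedDeriv_const_mul_field, iteratedDeriv_const_mul_field,
      ih (contDiff_delAlong hf 1) fun l n => ?_, ih (contDiff_delBarAlong hf 1) fun l n => ?_]
    · simp
    · exact hjet l (n + 1)
    · rw [iterate_delBarAlong_delAlong hf]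
      exact hjet (l + 1) n

theorem eq_zero_of_jet_eq_zero {f : ℂ → ℂ} (hf : ContDiff ℝ ω f)
    (hjet : ∀ l n, (delAlong 1)^[l] ((delBarAlong 1)^[n] f) 0 = 0) : f = 0 := by
  funext z
  have hline : AnalyticOnNhd ℝ (fun t : ℝ => f (t • z)) univ :=
    contDiff_omega_iff_analyticOnNhd.1 (hf.comp (by fun_prop : ContDiff ℝ ω fun t : ℝ => t • z))
  have horder : analyticOrderAt (fun t : ℝ => f (t • z)) 0 = ⊤ :=
    ENat.eq_top_iff_forall_ge.2 fun k =>
      (natCast_le_analyticOrderAt_iff_iteratedDeriv_eq_zero (hline 0 (mem_univ 0))).2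
        fun i _ => iteratedDeriv_line_eq_zero hf hjet z i
  have := hline.eqOn_zero_of_preconnected_of_eventuallyEq_zero isPreconnected_univ
    (mem_univ 0) (analyticOrderAt_eq_top.1 horder) (mem_univ 1)
  simpa using this

theorem delAlong_sum_pow_mul {a : ℕ → ℂ → ℂ} {z : ℂ} (ha : ∀ j, DifferentiableAt ℝ (a j) z)
    (ha' : ∀ j, delAlong 1 (a j) z = 0) (n : ℕ) :
    delAlong 1 (fun z => ∑ j ∈ range (n + 1), z ^ j * a j z) z =
      ∑ j ∈ range n, z ^ j * ((j + 1) * a (j + 1) z) := by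
  induction n with
  | zero => simpa using ha' 0
  | succ n ih =>
    have hpow : delAlong 1 (fun z : ℂ => z ^ (n + 1)) z = (n + 1) * z ^ n := by
      rw [delAlong_eq_fderiv (by fun_prop)]
      simp
    have hterm (j : ℕ) : DifferentiableAt ℝ (fun z => z ^ j * a j z) z := by
      have := ha j
      fun_prop
    simp only [sum_range_succ _ (n + 1)]
    rw [delAlong_add (DifferentiableAt.fun_sum fun j _ => hterm j) (hterm _), ih,
      delAlong_mul (by fun_prop) (ha _), ha', hpow, sum_range_succ _ n]
    ring

theorem exists_sum_pow_mul_of_iterate_delAlong_eq_zero {n : ℕ} {q : ℂ → ℂ} (hq : ContDiff ℝ ω q)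
    (h : (delAlong 1)^[n] q = 0) :
    ∃ a : ℕ → ℂ → ℂ, (∀ j, ContDiff ℝ ω (a j)) ∧ (∀ j z, delAlong 1 (a j) z = 0) ∧
      ∀ z, q z = ∑ j ∈ range n, z ^ j * a j z := by
  induction n generalizing q with
  | zero =>
    exact ⟨fun _ _ => 0, fun _ => contDiff_const, by simp [delAlong], by simpa using congrFun h⟩
  | succ n ih =>
    obtain ⟨a, ha, ha', hsum⟩ := ih (contDiff_delAlong hq 1) h
    -- The coefficients of a primitive of `∂q`; the `0`-th one vanishes as `x / 0 = 0`.
    let b (j : ℕ) (z : ℂ) : ℂ := a (j - 1) z / j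
    have hb (j : ℕ) : ContDiff ℝ ω (b j) := (ha (j - 1)).div_const _
    have hb' (j : ℕ) (z : ℂ) : delAlong 1 (b j) z = 0 := by
      simp only [b, div_eq_mul_inv]
      rw [delAlong_mul ((ha _).differentiable (by simp) z) (by fun_prop), ha']
      simp [delAlong]
    let r (z : ℂ) : ℂ := q z - ∑ j ∈ range (n + 1), z ^ j * b j z
    have hprimitive : ContDiff ℝ ω fun z => ∑ j ∈ range (n + 1), z ^ j * b j z := by fun_prop
    have hr' (z : ℂ) : delAlong 1 r z = 0 := by
      rw [delAlong_sub (hq.differentiable (by simp) z) (hprimitive.differentiable (by simp) z),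
        delAlong_sum_pow_mul (fun j => (hb j).differentiable (by simp) z) fun j => hb' j z,
        sub_eq_zero, hsum]
      refine sum_congr rfl fun j _ => ?_
      simp only [b]
      push_cast
      field_simp
    refine ⟨Function.update b 0 r, fun j => ?_, fun j => ?_, fun z => ?_⟩
    · rcases eq_or_ne j 0 with rfl | hj
      · rw [Function.update_self]
        exact hq.sub hprimitive
      · rw [Function.update_of_ne hj]
        exact hb j
    · rcases eq_or_ne j 0 with rfl | hj
      · rwa [Function.update_self]
      · rw [Function.update_of_ne hj]
        exact hb' j
    · simp [sum_range_succ', r, b]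

theorem eqOn_zero_of_sum_pow_mul_eq_zero {n : ℕ} {U : Set ℂ} (hU : IsOpen U) {a : ℕ → ℂ → ℂ}
    (ha : ∀ j, DifferentiableOn ℝ (a j) U) (ha' : ∀ j, ∀ z ∈ U, delAlong 1 (a j) z = 0)
    (h : ∀ z ∈ U, ∑ j ∈ range n, z ^ j * a j z = 0) {j : ℕ} (hj : j < n) :
    EqOn (a j) 0 U := by
  induction n generalizing a j with
  | zero => omega
  | succ n ih =>
    have hsucc : ∀ j < n, EqOn (a (j + 1)) 0 U := fun j hj z hz => by
      have := ih (a := fun j z => (j + 1) * a (j + 1) z) (fun j => (ha _).const_mul _)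
        (fun j z hz => ?_) (fun z hz => ?_) hj hz
      · simpa [Nat.cast_add_one_ne_zero] using this
      · rw [delAlong_mul (by fun_prop) ((ha _).differentiableAt (hU.mem_nhds hz)), ha' _ z hz]
        simp [delAlong]
      · rw [← delAlong_sum_pow_mul (fun j => (ha j).differentiableAt (hU.mem_nhds hz))
          fun j => ha' j z hz]
        have : (fun z => ∑ j ∈ range (n + 1), z ^ j * a j z) =ᶠ[𝓝 z] fun _ => 0 :=
          (hU.eventually_mem hz).mono h
        simp [delAlong, this.fderiv_eq]
    rcases j with - | j
    · intro z hz
      have := h z hz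
      rw [sum_range_succ', sum_eq_zero fun j hj => ?_] at this
      · simpa using this
      · simp [hsucc j (mem_range.1 hj) hz]
    · exact hsucc j (by omega)

end PlaneFunctions

section Reciprocal

open Filter Finset
open scoped ContDiff ComplexConjugate Topology

theorem iterate_delAlong_eq_zero_of_eq_sum_pow_mul {n : ℕ} {U : Set ℂ} (hU : IsOpen U)
    {a : ℕ → ℂ → ℂ} (ha : ∀ j, DifferentiableOn ℝ (a j) U)
    (ha' : ∀ j, ∀ z ∈ U, delAlong 1 (a j) z = 0) {q : ℂ → ℂ}
    (h : ∀ z ∈ U, q z = ∑ j ∈ range n, z ^ j * a j z) {z : ℂ} (hz : z ∈ U) :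
    (delAlong 1)^[n] q z = 0 := by
  induction n generalizing a q with
  | zero => simpa using h z hz
  | succ n ih =>
    refine ih (a := fun j z => (j + 1) * a (j + 1) z) (fun j => (ha _).const_mul _)
      (fun j z hz => ?_) fun z hz => ?_
    · rw [delAlong_mul (by fun_prop) ((ha _).differentiableAt (hU.mem_nhds hz)), ha' _ z hz]
      simp [delAlong]
    · rw [← delAlong_sum_pow_mul (fun j => (ha j).differentiableAt (hU.mem_nhds hz))
        fun j => ha' j z hz]
      have : q =ᶠ[𝓝 z] fun z => ∑ j ∈ range (n + 1), z ^ j * a j z :=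
        (hU.eventually_mem hz).mono h
      simp only [delAlong, this.fderiv_eq]

theorem delAlong_comp {h φ : ℂ → ℂ} {z : ℂ} (hh : DifferentiableAt ℝ h (φ z))
    (hφ : DifferentiableAt ℂ φ z) :
    delAlong 1 (fun z => h (φ z)) z = deriv φ z * delAlong 1 h (φ z) := by
  refine delAlong_eq_of_fderiv_smul (b := conj (deriv φ z) * delBarAlong 1 h (φ z)) fun c => ?_
  have hφ' := hφ.hasDerivAt.complexToReal_fderiv
  rw [show (fun z => h (φ z)) = h ∘ φ from rfl, (hh.hasFDerivAt.comp z hφ').fderiv]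
  have := fderiv_smul_eq_delAlong_add_delBarAlong h (φ z) 1 (deriv φ z * c)
  simp only [smul_eq_mul, mul_one, map_mul] at this
  simp only [ContinuousLinearMap.comp_apply, smul_apply, one_apply_eq_self,
    smul_eq_mul, mul_one, this]
  ring

theorem exists_forall_eq_of_delAlong_eq_zero {h : ℂ → ℂ} (hh : Differentiable ℝ h)
    (h' : ∀ z, delAlong 1 h z = 0) {C : ℝ} (hC : ∀ z, ‖h z‖ ≤ C) : ∃ c, ∀ z, h z = c := by
  have hconj : Differentiable ℂ fun z => conj (h z) := fun z =>
    differentiableAt_of_delBarAlong_eq_zero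
      (Complex.conjCLE.differentiableAt.comp z (hh z))
      (by rw [delBarAlong_conj (hh z), h', map_zero])
  have hbounded : Bornology.IsBounded (range fun z => conj (h z)) :=
    isBounded_iff_forall_norm_le.2 ⟨C, by rintro _ ⟨z, rfl⟩; simpa using hC z⟩
  exact ⟨h 0, fun z => (starRingEnd ℂ).injective (hconj.apply_eq_apply_of_bounded hbounded z 0)⟩

theorem exists_norm_le_of_eq_comp_inv {h k : ℂ → ℂ} (hh : Continuous h) (hk : Continuous k)
    (heq : ∀ z ≠ 0, h z = k z⁻¹) : ∃ C, ∀ z, ‖h z‖ ≤ C := by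
  obtain ⟨C, hC⟩ := (isCompact_closedBall (0 : ℂ) 1).exists_bound_of_continuousOn hh.continuousOn
  obtain ⟨D, hD⟩ := (isCompact_closedBall (0 : ℂ) 1).exists_bound_of_continuousOn hk.continuousOn
  refine ⟨max C D, fun z => ?_⟩
  rcases le_total ‖z‖ 1 with hz | hz
  · exact (hC z (by simpa using hz)).trans (le_max_left _ _)
  · rw [heq z (norm_pos_iff.1 (by linarith))]
    exact (hD _ (by simpa using inv_le_one_of_one_le₀ hz)).trans (le_max_right _ _)

theorem sum_pow_mul_reflect {z : ℂ} (hz : z ≠ 0) (d : ℕ) (a : ℕ → ℂ) :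
    z ^ d * ∑ j ∈ range (d + 1), z⁻¹ ^ j * a j = ∑ j ∈ range (d + 1), z ^ j * a (d - j) := by
  rw [← sum_range_reflect, mul_sum]
  refine sum_congr rfl fun j hj => ?_
  have hjd : j ≤ d := Nat.lt_succ_iff.1 (mem_range.1 hj)
  rw [show d + 1 - 1 - j = d - j by omega, ← mul_assoc, inv_pow, pow_sub₀ z hz hjd]
  field_simp

theorem iterate_delAlong_eq_zero_of_reciprocal {d : ℕ} {q r : ℂ → ℂ} (hq : ContDiff ℝ ω q)
    (hr : ContDiff ℝ ω r) (h : (delAlong 1)^[d + 1] q = 0)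
    (hqr : ∀ z ≠ 0, q z = z ^ d * r z⁻¹) : (delAlong 1)^[d + 1] r = 0 := by
  obtain ⟨a, ha, ha', hsum⟩ := exists_sum_pow_mul_of_iterate_delAlong_eq_zero hq h
  have hcont : Continuous ((delAlong 1)^[d + 1] r) :=
    (Function.Iterate.rec (ContDiff ℝ ω) hr (fun _ h => contDiff_delAlong h 1) (d + 1)).continuous
  refine hcont.ext_on (dense_compl_singleton 0) continuous_const fun z hz => ?_
  refine iterate_delAlong_eq_zero_of_eq_sum_pow_mul isOpen_compl_singleton
    (a := fun j z => a (d - j) z⁻¹) (fun j z hz => ?_) (fun j z hz => ?_) (fun z hz => ?_) hz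
  · have := (ha (d - j)).differentiable (by simp) z⁻¹
    have hinv : DifferentiableAt ℝ (fun z : ℂ => z⁻¹) z := by fun_prop (disch := exact hz)
    exact (this.comp z hinv).differentiableWithinAt
  · rw [delAlong_comp ((ha _).differentiable (by simp) _) (differentiableAt_inv hz), ha', mul_zero]
  · rw [← sum_pow_mul_reflect hz d (a · z⁻¹), ← hsum, hqr _ (inv_ne_zero hz), inv_inv, inv_pow,
      mul_inv_cancel_left₀ (pow_ne_zero d hz)]

theorem exists_eq_sum_of_reciprocal {d : ℕ} {q r : ℂ → ℂ} (hq : ContDiff ℝ ω q)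
    (hr : ContDiff ℝ ω r) (h : (delAlong 1)^[d + 1] q = 0)
    (hqr : ∀ z ≠ 0, q z = z ^ d * r z⁻¹) :
    ∃ c : ℕ → ℂ, ∀ z, q z = ∑ j ∈ range (d + 1), c j * z ^ j := by
  obtain ⟨a, ha, ha', hqa⟩ := exists_sum_pow_mul_of_iterate_delAlong_eq_zero hq h
  obtain ⟨b, hb, hb', hrb⟩ := exists_sum_pow_mul_of_iterate_delAlong_eq_zero hr
    (iterate_delAlong_eq_zero_of_reciprocal hq hr h hqr)
  have hcoeff (j : ℕ) (hj : j < d + 1) (z : ℂ) (hz : z ≠ 0) : a j z = b (d - j) z⁻¹ := by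
    have hinv (z : ℂ) (hz : z ≠ 0) (j : ℕ) : DifferentiableAt ℝ (fun z => b (d - j) z⁻¹) z :=
      ((hb (d - j)).differentiable (by simp) z⁻¹).comp z (by fun_prop (disch := exact hz))
    have := eqOn_zero_of_sum_pow_mul_eq_zero (n := d + 1) isOpen_compl_singleton
      (a := fun j z => a j z - b (d - j) z⁻¹) (fun j z hz => ?_) (fun j z hz => ?_)
      (fun z hz => ?_) hj hz
    · exact sub_eq_zero.1 this
    · exact (((ha j).differentiable (by simp) z).sub (hinv z hz j)).differentiableWithinAt
    · rw [delAlong_sub ((ha j).differentiable (by simp) z) (hinv z hz j), ha',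
        delAlong_comp ((hb _).differentiable (by simp) _) (differentiableAt_inv hz), hb', mul_zero,
        sub_zero]
    · simp only [mul_sub, sum_sub_distrib]
      rw [← hqa, ← sum_pow_mul_reflect hz d (b · z⁻¹), ← hrb, hqr z hz, sub_self]
  have hconst (j : ℕ) : ∃ c, j < d + 1 → ∀ z, a j z = c := by
    by_cases hj : j < d + 1
    · obtain ⟨C, hC⟩ := exists_norm_le_of_eq_comp_inv (ha j).continuous (hb (d - j)).continuous
        (hcoeff j hj)
      obtain ⟨c, hc⟩ := exists_forall_eq_of_delAlong_eq_zero ((ha j).differentiable (by simp))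
        (ha' j) hC
      exact ⟨c, fun _ => hc⟩
    · exact ⟨0, fun h => absurd h hj⟩
  choose c hc using hconst
  refine ⟨c, fun z => (hqa z).trans (sum_congr rfl fun j hj => ?_)⟩
  rw [hc j (mem_range.1 hj), mul_comm]

end Reciprocal

section Chords

open scoped ContDiff ComplexConjugate Real

/-- The unit sphere of `ℂ²`, in the coordinates of `ℂ × ℂ` (whose own norm is the sup norm). -/
def complexSphere : Set (ℂ × ℂ) := {z | ‖z.1‖ ^ 2 + ‖z.2‖ ^ 2 = 1}

/-- The complex line of slope `l` through `(p, 0)` cuts the unit sphere in a circle; this is the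
centre of the projection of that circle to the first coordinate. -/
noncomputable def chordCenter (p : ℝ) (l : ℂ) : ℂ := p * ‖l‖ ^ 2 / (1 + ‖l‖ ^ 2)

/-- The radius of the circle with centre `chordCenter p l`. -/
noncomputable def chordRadius (p : ℝ) (l : ℂ) : ℝ :=
  √(1 + ‖l‖ ^ 2 * (1 - p ^ 2)) / (1 + ‖l‖ ^ 2)

/-- The first coordinate of `chord`. -/
noncomputable def chordFst (p : ℝ) (y : ℝ × ℂ) : ℂ :=
  circleMap (chordCenter p y.2) (chordRadius p y.2) y.1

/-- Parametrization by the angle `y.1` of the circle in which the complex line of slope `y.2`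
through `(p, 0)` cuts the unit sphere. -/
noncomputable def chord (p : ℝ) (y : ℝ × ℂ) : ℂ × ℂ := (chordFst p y, y.2 * (chordFst p y - p))

/-- The nowhere vanishing function `(1 + |l|²)(z - p) + p` on the chord of slope `l`; its products
with `conj z` and `conj z - p` are polynomials in `z`. -/
noncomputable def chordFactor (p : ℝ) (y : ℝ × ℂ) : ℂ :=
  √(1 + ‖y.2‖ ^ 2 * (1 - p ^ 2)) * Complex.exp (y.1 * Complex.I)

/-- The integral of `G(z, w) dz` over the circle in which the complex line of slope `l` through
`(p, 0)` cuts the unit sphere. -/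
noncomputable def chordMoment (p : ℝ) (G : ℂ × ℂ → ℂ) (l : ℂ) : ℂ :=
  ∮ z in C(chordCenter p l, chordRadius p l), G (z, l * (z - p))

variable {p : ℝ} {G : ℂ × ℂ → ℂ}

theorem ofReal_one_add_sq_ne_zero (l : ℂ) : (1 + ‖l‖ ^ 2 : ℂ) ≠ 0 :=
  mod_cast (by positivity : (1 + ‖l‖ ^ 2 : ℝ) ≠ 0)

theorem chordFactor_eq (p : ℝ) (y : ℝ × ℂ) :
    chordFactor p y = (1 + ‖y.2‖ ^ 2) * (chordFst p y - p) + p := by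
  have := ofReal_one_add_sq_ne_zero y.2
  simp only [chordFactor, chordFst, chordCenter, chordRadius, circleMap]
  push_cast
  field_simp
  ring

theorem chord_discriminant_pos (hp : p ^ 2 ≤ 1) (l : ℂ) : 0 < 1 + ‖l‖ ^ 2 * (1 - p ^ 2) := by
  have := mul_nonneg (sq_nonneg ‖l‖) (sub_nonneg.2 hp)
  linarith

theorem chordFactor_ne_zero (hp : p ^ 2 ≤ 1) (y : ℝ × ℂ) : chordFactor p y ≠ 0 :=
  mul_ne_zero (Complex.ofReal_ne_zero.2 (Real.sqrt_pos.2 (chord_discriminant_pos hp y.2)).ne')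
    (Complex.exp_ne_zero _)

theorem chordRadius_pos (hp : p ^ 2 ≤ 1) (l : ℂ) : 0 < chordRadius p l :=
  div_pos (Real.sqrt_pos.2 (chord_discriminant_pos hp l)) (by positivity)

theorem chordFst_equation (hp : p ^ 2 ≤ 1) (y : ℝ × ℂ) :
    (1 + y.2 * conj y.2) * ((chordFst p y - p) * (conj (chordFst p y) - p)) +
      p * (chordFst p y - p + (conj (chordFst p y) - p)) = 1 - p ^ 2 := by
  have hnorm : chordFactor p y * conj (chordFactor p y) = 1 + ‖y.2‖ ^ 2 * (1 - p ^ 2) := by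
    rw [Complex.mul_conj', chordFactor, norm_mul, Complex.norm_exp_ofReal_mul_I, Complex.norm_real,
      Real.norm_of_nonneg (Real.sqrt_nonneg _), mul_one]
    exact_mod_cast Real.sq_sqrt (chord_discriminant_pos hp y.2).le
  rw [chordFactor_eq] at hnorm
  simp only [map_add, map_mul, map_sub, map_one, map_pow, Complex.conj_ofReal] at hnorm
  rw [Complex.mul_conj']
  apply mul_left_cancel₀ (ofReal_one_add_sq_ne_zero y.2)
  linear_combination hnorm

theorem conj_sub_mul_chordFactor (hp : p ^ 2 ≤ 1) (y : ℝ × ℂ) :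
    (conj (chordFst p y) - p) * chordFactor p y = 1 - p * chordFst p y := by
  rw [chordFactor_eq, ← Complex.mul_conj']
  linear_combination chordFst_equation hp y

theorem conj_mul_chordFactor (hp : p ^ 2 ≤ 1) (y : ℝ × ℂ) :
    conj (chordFst p y) * chordFactor p y = 1 + ‖y.2‖ ^ 2 * p * (chordFst p y - p) := by
  have := conj_sub_mul_chordFactor hp y
  rw [chordFactor_eq] at *
  linear_combination this

theorem chord_mem_complexSphere (hp : p ^ 2 ≤ 1) (y : ℝ × ℂ) : chord p y ∈ complexSphere := by
  rw [complexSphere, mem_ofPred_eq, ← Complex.ofReal_inj]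
  push_cast
  rw [← Complex.mul_conj', ← Complex.mul_conj']
  simp only [chord, map_mul, map_sub, Complex.conj_ofReal]
  linear_combination chordFst_equation hp y

theorem contDiff_ofReal_comp {E : Type*} [NormedAddCommGroup E] [NormedSpace ℝ E] {f : E → ℝ}
    (hf : ContDiff ℝ ω f) : ContDiff ℝ ω fun x => (f x : ℂ) :=
  Complex.ofRealCLM.contDiff.comp hf

theorem contDiff_conj_comp {E : Type*} [NormedAddCommGroup E] [NormedSpace ℝ E] {f : E → ℂ}
    (hf : ContDiff ℝ ω f) : ContDiff ℝ ω fun x => conj (f x) :=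
  Complex.conjCLE.toContinuousLinearMap.contDiff.comp hf

theorem contDiff_sqrt_chord (hp : p ^ 2 ≤ 1) :
    ContDiff ℝ ω fun y : ℝ × ℂ => √(1 + ‖y.2‖ ^ 2 * (1 - p ^ 2)) :=
  (contDiff_const.add ((contDiff_snd.norm_sq ℝ).mul contDiff_const)).sqrt
    fun y => (chord_discriminant_pos hp y.2).ne'

theorem contDiff_chordFactor (hp : p ^ 2 ≤ 1) : ContDiff ℝ ω (chordFactor p) := by
  have := contDiff_ofReal_comp (contDiff_sqrt_chord hp)
  have := contDiff_ofReal_comp (contDiff_fst (𝕜 := ℝ) (n := ω) (E := ℝ) (F := ℂ))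
  unfold chordFactor
  fun_prop

theorem contDiff_chordFst (hp : p ^ 2 ≤ 1) : ContDiff ℝ ω (chordFst p) := by
  have heq : chordFst p = fun y => (chordFactor p y - p) * (1 + ‖y.2‖ ^ 2 : ℂ)⁻¹ + p := by
    funext y
    have := ofReal_one_add_sq_ne_zero y.2
    rw [chordFactor_eq]
    field_simp
    ring
  have hnorm : ContDiff ℝ ω fun y : ℝ × ℂ => (1 + ‖y.2‖ ^ 2 : ℂ) := by
    simp only [← Complex.mul_conj']
    exact contDiff_const.add (contDiff_snd.mul (contDiff_conj_comp contDiff_snd))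
  rw [heq]
  exact (((contDiff_chordFactor hp).sub contDiff_const).mul
    (hnorm.inv fun y => ofReal_one_add_sq_ne_zero y.2)).add contDiff_const

theorem contDiff_chord (hp : p ^ 2 ≤ 1) : ContDiff ℝ ω (chord p) := by
  have := contDiff_chordFst hp
  unfold chord
  fun_prop

theorem contDiff_comp_chord (hp : p ^ 2 ≤ 1) (hG : AnalyticOnNhd ℝ G (range (chord p))) :
    ContDiff ℝ ω fun y => G (chord p y) :=
  contDiff_omega_iff_analyticOnNhd.2 fun y _ => (hG _ (mem_range_self y)).fun_comp
    (contDiff_omega_iff_analyticOnNhd.1 (contDiff_chord hp) y (mem_univ y))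

theorem contDiff_fderiv_chordFst (hp : p ^ 2 ≤ 1) (v : ℝ × ℂ) :
    ContDiff ℝ ω fun y => fderiv ℝ (chordFst p) y v :=
  contDiff_omega_iff_analyticOnNhd.2 fun y _ =>
    ((ContinuousLinearMap.apply ℝ ℂ v).analyticAt _).comp
      (contDiff_omega_iff_analyticOnNhd.1 (contDiff_chordFst hp) y (mem_univ y)).fderiv

theorem chordMoment_eq_integral (hp : p ^ 2 ≤ 1) (G : ℂ × ℂ → ℂ) (l : ℂ) :
    chordMoment p G l =
      ∫ θ in (0 : ℝ)..2 * π, G (chord p (θ, l)) * fderiv ℝ (chordFst p) (θ, l) (1, 0) := by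
  refine intervalIntegral.integral_congr fun θ _ => ?_
  have := (hasDerivAt_comp_prodMk_right (x := l)
    ((contDiff_chordFst hp).differentiable (by simp) (θ, l))).deriv
  rw [← this, mul_comm]
  rfl

theorem contDiff_chordMoment (hp : p ^ 2 ≤ 1) (hG : AnalyticOnNhd ℝ G (range (chord p))) :
    ContDiff ℝ ω (chordMoment p G) := by
  rw [funext (chordMoment_eq_integral hp G)]
  exact contDiff_omega_integral
    ((contDiff_comp_chord hp hG).mul (contDiff_fderiv_chordFst hp (1, 0))) 0 (2 * π)

theorem hasDerivAt_line_conj {E : Type*} [NormedAddCommGroup E] [NormedSpace ℝ E] {f : E → ℂ}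
    {y : E} (hf : DifferentiableAt ℝ f y) (v : E) :
    HasDerivAt (fun t : ℝ => f (y + t • v)) (fderiv ℝ f y v) 0 ∧
      HasDerivAt (fun t : ℝ => conj (f (y + t • v))) (conj (fderiv ℝ f y v)) 0 := by
  have hline : HasDerivAt (fun t : ℝ => y + t • v) v 0 := by
    simpa using ((hasDerivAt_id (0 : ℝ)).smul_const v).const_add y
  have hf' : HasDerivAt (fun t : ℝ => f (y + t • v)) (fderiv ℝ f y v) 0 := by
    have : HasFDerivAt f (fderiv ℝ f y) (y + (0 : ℝ) • v) := by simpa using hf.hasFDerivAt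
    exact this.comp_hasDerivAt 0 hline
  exact ⟨hf', Complex.conjCLE.toContinuousLinearMap.hasFDerivAt.comp_hasDerivAt 0 hf'⟩

theorem chordFactor_mul_conj_fderiv_add (hp : p ^ 2 ≤ 1) (y v : ℝ × ℂ) :
    chordFactor p y * conj (fderiv ℝ (chordFst p) y v) +
        conj (chordFactor p y) * fderiv ℝ (chordFst p) y v =
      -(v.2 * conj y.2 + conj v.2 * y.2) * ((chordFst p y - p) * (conj (chordFst p y) - p)) := by
  obtain ⟨hz, hzc⟩ := hasDerivAt_line_conj ((contDiff_chordFst hp).differentiable (by simp) y) v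
  obtain ⟨hl, hlc⟩ := hasDerivAt_line_conj (differentiableAt_snd (𝕜 := ℝ) (p := y)) v
  simp only [fderiv_snd, ContinuousLinearMap.coe_snd'] at hl hlc
  have hconstraint := (((hl.mul hlc).const_add 1).mul
    ((hz.sub_const (p : ℂ)).mul (hzc.sub_const (p : ℂ)))).add
    (((hz.sub_const (p : ℂ)).add (hzc.sub_const (p : ℂ))).const_mul (p : ℂ))
  have hzero := hconstraint.unique ((hasDerivAt_const (0 : ℝ) (1 - p ^ 2 : ℂ)).congr_of_eventuallyEq
    (.of_forall fun t => chordFst_equation hp (y + t • v)))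
  simp only [Pi.mul_apply, zero_smul, add_zero] at hzero
  rw [chordFactor_eq]
  simp only [map_add, map_mul, map_sub, map_one, map_pow, Complex.conj_ofReal]
  rw [← Complex.mul_conj']
  linear_combination hzero

end Chords

section MomentDerivatives

open scoped ContDiff ComplexConjugate Real

/-- The tangential Cauchy–Riemann operator of the sphere. -/
noncomputable def tangentialCR (G : ℂ × ℂ → ℂ) (z : ℂ × ℂ) : ℂ :=
  z.1 * delBarAlong (0, 1) G z - z.2 * delBarAlong (1, 0) G z

/-- The weight by which the slope derivative of `chordMoment p G` multiplies `tangentialCR G`. -/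
noncomputable def chordWeight (p : ℝ) (y : ℝ × ℂ) : ℂ :=
  (conj (chordFst p y) - p) * (chordFactor p y)⁻¹

/-- Up to the factor `-conj l`, the part of the `∂`-derivative of `chordMoment p G` that vanishes at
slope `l = 0`. -/
noncomputable def chordRemainder (p : ℝ) (G : ℂ × ℂ → ℂ) (l : ℂ) : ℂ :=
  ∫ θ in (0 : ℝ)..2 * π,
    (delBarAlong (1, 0) G (chord p (θ, l)) + conj l * delBarAlong (0, 1) G (chord p (θ, l))) *
      ((chordFst p (θ, l) - p) * chordWeight p (θ, l)) * fderiv ℝ (chordFst p) (θ, l) (1, 0)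

variable {p : ℝ} {G : ℂ × ℂ → ℂ}

theorem contDiff_chordWeight (hp : p ^ 2 ≤ 1) : ContDiff ℝ ω (chordWeight p) :=
  ((contDiff_conj_comp (contDiff_chordFst hp)).sub contDiff_const).mul
    ((contDiff_chordFactor hp).inv (chordFactor_ne_zero hp))

theorem chordWeight_mul (hp : p ^ 2 ≤ 1) (y : ℝ × ℂ) :
    chordWeight p y * ((1 + y.2 * conj y.2) * (chordFst p y - p) + p) =
      conj (chordFst p y) - p := by
  rw [Complex.mul_conj', ← chordFactor_eq, chordWeight,
    inv_mul_cancel_right₀ (chordFactor_ne_zero hp y)]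

theorem contDiff_chordRemainderIntegrand (hp : p ^ 2 ≤ 1)
    (hG : AnalyticOnNhd ℝ G (range (chord p))) :
    ContDiff ℝ ω fun y : ℝ × ℂ =>
      (delBarAlong (1, 0) G (chord p y) + conj y.2 * delBarAlong (0, 1) G (chord p y)) *
        ((chordFst p y - p) * chordWeight p y) * fderiv ℝ (chordFst p) y (1, 0) := by
  have hfst := contDiff_comp_chord hp fun z hz => analyticAt_delBarAlong (hG z hz) (1, 0)
  have hsnd := contDiff_comp_chord hp fun z hz => analyticAt_delBarAlong (hG z hz) (0, 1)
  exact ((hfst.add ((contDiff_conj_comp contDiff_snd).mul hsnd)).mul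
    (((contDiff_chordFst hp).sub contDiff_const).mul (contDiff_chordWeight hp))).mul
    (contDiff_fderiv_chordFst hp (1, 0))

theorem contDiff_chordRemainder (hp : p ^ 2 ≤ 1) (hG : AnalyticOnNhd ℝ G (range (chord p))) :
    ContDiff ℝ ω (chordRemainder p G) :=
  contDiff_omega_integral (contDiff_chordRemainderIntegrand hp hG) 0 (2 * π)

theorem analyticAt_tangentialCR {z : ℂ × ℂ} (hG : AnalyticAt ℝ G z) :
    AnalyticAt ℝ (tangentialCR G) z :=
  (analyticAt_fst.mul (analyticAt_delBarAlong hG _)).sub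
    (analyticAt_snd.mul (analyticAt_delBarAlong hG _))

theorem fderiv_prod_eq_wirtinger (G : ℂ × ℂ → ℂ) (z u : ℂ × ℂ) :
    fderiv ℝ G z u = u.1 * delAlong (1, 0) G z + conj u.1 * delBarAlong (1, 0) G z +
      (u.2 * delAlong (0, 1) G z + conj u.2 * delBarAlong (0, 1) G z) := by
  rw [← fderiv_smul_eq_delAlong_add_delBarAlong, ← fderiv_smul_eq_delAlong_add_delBarAlong,
    ← map_add]
  simp

theorem fderiv_comp_chord (hp : p ^ 2 ≤ 1) (hG : AnalyticOnNhd ℝ G (range (chord p)))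
    (y v : ℝ × ℂ) :
    fderiv ℝ (fun y => G (chord p y)) y v = fderiv ℝ G (chord p y)
      (fderiv ℝ (chordFst p) y v,
        y.2 * fderiv ℝ (chordFst p) y v + (chordFst p y - p) * v.2) := by
  have hz := ((contDiff_chordFst hp).differentiable (by simp) y).hasFDerivAt
  have hchord := hz.prodMk (hasFDerivAt_snd.mul (hz.sub_const (p : ℂ)))
  exact DFunLike.congr_fun
    ((hG _ (mem_range_self y)).differentiableAt.hasFDerivAt.comp y hchord).fderiv v

theorem chordFst_wronskian (hp : p ^ 2 ≤ 1) (y : ℝ × ℂ) (e : ℂ) :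
    conj (fderiv ℝ (chordFst p) y (0, e)) * fderiv ℝ (chordFst p) y (1, 0) -
        conj (fderiv ℝ (chordFst p) y (1, 0)) * fderiv ℝ (chordFst p) y (0, e) =
      -(e * conj y.2 + conj e * y.2) * ((chordFst p y - p) * chordWeight p y) *
        fderiv ℝ (chordFst p) y (1, 0) := by
  have hslope := chordFactor_mul_conj_fderiv_add hp y (0, e)
  have hangle := chordFactor_mul_conj_fderiv_add hp y (1, 0)
  simp only [map_zero, zero_mul, add_zero, neg_zero] at hslope hangle
  have hfactor := chordFactor_ne_zero hp y
  rw [chordWeight]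
  field_simp
  linear_combination fderiv ℝ (chordFst p) y (1, 0) * hslope -
    fderiv ℝ (chordFst p) y (0, e) * hangle

theorem fderiv_comp_chord_mul_sub (hp : p ^ 2 ≤ 1) (hG : AnalyticOnNhd ℝ G (range (chord p)))
    (y : ℝ × ℂ) (e : ℂ) :
    fderiv ℝ (fun y => G (chord p y)) y (0, e) * fderiv ℝ (chordFst p) y (1, 0) -
        fderiv ℝ (fun y => G (chord p y)) y (1, 0) * fderiv ℝ (chordFst p) y (0, e) =
      e * ((chordFst p y - p) * delAlong (0, 1) G (chord p y) *
          fderiv ℝ (chordFst p) y (1, 0)) -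
        e * conj y.2 *
          ((delBarAlong (1, 0) G (chord p y) + conj y.2 * delBarAlong (0, 1) G (chord p y)) *
            ((chordFst p y - p) * chordWeight p y) * fderiv ℝ (chordFst p) y (1, 0)) +
        conj e * (chordWeight p y * tangentialCR G (chord p y) *
          fderiv ℝ (chordFst p) y (1, 0)) := by
  have hwronskian := chordFst_wronskian hp y e
  have hweight := chordWeight_mul hp y
  rw [fderiv_comp_chord hp hG, fderiv_comp_chord hp hG, fderiv_prod_eq_wirtinger,
    fderiv_prod_eq_wirtinger]
  simp only [map_add, map_mul, map_sub, Complex.conj_ofReal, mul_zero, add_zero, tangentialCR,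
    chord]
  linear_combination
    (delBarAlong (1, 0) G (chordFst p y, y.2 * (chordFst p y - p)) +
      conj y.2 * delBarAlong (0, 1) G (chordFst p y, y.2 * (chordFst p y - p))) * hwronskian -
    conj e * delBarAlong (0, 1) G (chordFst p y, y.2 * (chordFst p y - p)) *
      fderiv ℝ (chordFst p) y (1, 0) * hweight

theorem fderiv_chordMoment (hp : p ^ 2 ≤ 1) (hG : AnalyticOnNhd ℝ G (range (chord p)))
    (l e : ℂ) :
    fderiv ℝ (chordMoment p G) l e =
      e * (chordMoment p (fun z => (z.1 - p) * delAlong (0, 1) G z) l -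
          conj l * chordRemainder p G l) +
        conj e * ∫ θ in (0 : ℝ)..2 * π, chordWeight p (θ, l) *
          tangentialCR G (chord p (θ, l)) * fderiv ℝ (chordFst p) (θ, l) (1, 0) := by
  have integrable {Φ : ℝ × ℂ → ℂ} (hΦ : ContDiff ℝ ω Φ) :
      IntervalIntegrable (fun θ => Φ (θ, l)) MeasureTheory.volume 0 (2 * π) :=
    (hΦ.continuous.comp (by fun_prop : Continuous fun θ : ℝ => (θ, l))).intervalIntegrable _ _
  have hvelocity := contDiff_fderiv_chordFst hp (1, 0)
  have hmain := integrable ((((contDiff_chordFst hp).sub (contDiff_const (c := (p : ℂ)))).mul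
    (contDiff_comp_chord hp fun z hz => analyticAt_delAlong (hG z hz) (0, 1))).mul hvelocity)
  have hremainder := integrable (contDiff_chordRemainderIntegrand hp hG)
  have hCR := integrable (((contDiff_chordWeight hp).mul (contDiff_comp_chord hp
    fun z hz => analyticAt_tangentialCR (hG z hz))).mul hvelocity)
  have hperiodic (l : ℂ) : chordFst p (0, l) = chordFst p (2 * π, l) := by
    simp [chordFst, circleMap]
  rw [funext (chordMoment_eq_integral hp G), fderiv_integral_mul_fderiv
    ((contDiff_comp_chord hp hG).of_le (by simp)) ((contDiff_chordFst hp).of_le (by simp))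
    (fun l => by rw [chord, chord, hperiodic]) hperiodic, chordMoment_eq_integral hp]
  simp only [fderiv_comp_chord_mul_sub hp hG]
  rw [intervalIntegral.integral_add ((hmain.const_mul _).sub (hremainder.const_mul _))
    (hCR.const_mul _), intervalIntegral.integral_sub (hmain.const_mul _) (hremainder.const_mul _),
    intervalIntegral.integral_const_mul, intervalIntegral.integral_const_mul,
    intervalIntegral.integral_const_mul, chordRemainder, mul_sub, mul_assoc]
  rfl

theorem delAlong_chordMoment (hp : p ^ 2 ≤ 1) (hG : AnalyticOnNhd ℝ G (range (chord p)))
    (l : ℂ) :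
    delAlong 1 (chordMoment p G) l =
      chordMoment p (fun z => (z.1 - p) * delAlong (0, 1) G z) l -
        conj l * chordRemainder p G l :=
  delAlong_eq_of_fderiv_smul fun e =>
    (congrArg _ (mul_one e)).trans (fderiv_chordMoment hp hG l e)

theorem delBarAlong_chordMoment (hp : p ^ 2 ≤ 1) (hG : AnalyticOnNhd ℝ G (range (chord p)))
    (l : ℂ) :
    delBarAlong 1 (chordMoment p G) l = ∫ θ in (0 : ℝ)..2 * π, chordWeight p (θ, l) *
      tangentialCR G (chord p (θ, l)) * fderiv ℝ (chordFst p) (θ, l) (1, 0) :=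
  delBarAlong_eq_of_fderiv_smul fun e =>
    (congrArg _ (mul_one e)).trans (fderiv_chordMoment hp hG l e)

end MomentDerivatives

section Jets

open Polynomial
open scoped ContDiff ComplexConjugate Real

/-- The tangential Cauchy–Riemann operator of the sphere, normalized so that it corresponds to the
`∂̄`-derivative of `chordMoment 0` in the slope. -/
noncomputable def chartCR (G : ℂ × ℂ → ℂ) (z : ℂ × ℂ) : ℂ := conj z.1 ^ 2 * tangentialCR G z

/-- The jet of order `l` in `∂/∂z₂` and of order `n` in `chartCR` of `G`, along the circle in which
the line `z₂ = 0` cuts the sphere. -/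
noncomputable def circleJet (G : ℂ × ℂ → ℂ) (l n : ℕ) (z : ℂ) : ℂ :=
  (delAlong (0, 1))^[l] (chartCR^[n] G) (z, 0)

/-- The restriction of `G` to the circles in which the lines through `(p, 0)` of finite slope cut
the sphere is orthogonal to all polynomials in `z₁`. -/
def ChordMomentsVanish (p : ℝ) (G : ℂ × ℂ → ℂ) : Prop :=
  ∀ (ψ : ℂ[X]) (l : ℂ), chordMoment p (fun z => ψ.eval z.1 * G z) l = 0

variable {p : ℝ} {G : ℂ × ℂ → ℂ} {φ : ℂ → ℂ} {s : Set (ℂ × ℂ)} {z : ℂ × ℂ}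

theorem analyticOnNhd_iterate_chartCR (hG : AnalyticOnNhd ℝ G s) (n : ℕ) :
    AnalyticOnNhd ℝ (chartCR^[n] G) s :=
  Function.Iterate.rec (fun G => AnalyticOnNhd ℝ G s) hG (fun _ hG z hz =>
    (((Complex.conjCLE.toContinuousLinearMap.analyticAt _).fun_comp analyticAt_fst).pow 2).mul
      (analyticAt_tangentialCR (hG z hz))) n

theorem analyticOnNhd_iterate_delAlong (hG : AnalyticOnNhd ℝ G s) (v : ℂ × ℂ) (n : ℕ) :
    AnalyticOnNhd ℝ ((delAlong v)^[n] G) s :=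
  Function.Iterate.rec (fun G => AnalyticOnNhd ℝ G s) hG
    (fun _ hG z hz => analyticAt_delAlong (hG z hz) v) n

theorem analyticOnNhd_fst_mul (hφ : AnalyticOnNhd ℂ φ (range (chordFst p)))
    (hG : AnalyticOnNhd ℝ G (range (chord p))) :
    AnalyticOnNhd ℝ (fun z => φ z.1 * G z) (range (chord p)) := by
  rintro _ ⟨y, rfl⟩
  have := (hφ _ (mem_range_self y)).restrictScalars (𝕜 := ℝ)
  exact (this.fun_comp (x := chord p y) analyticAt_fst).mul (hG _ (mem_range_self y))

theorem delAlong_snd_fst_mul (hφ : DifferentiableAt ℂ φ z.1) (hG : DifferentiableAt ℝ G z) :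
    delAlong (0, 1) (fun z => φ z.1 * G z) z = φ z.1 * delAlong (0, 1) G z := by
  have hφ' : HasFDerivAt (fun z : ℂ × ℂ => φ z.1) _ z := hφ.hasFDerivAt.comp z hasFDerivAt_fst
  rw [delAlong_mul (hφ'.differentiableAt.restrictScalars ℝ) hG,
    delAlong_eq_fderiv hφ'.differentiableAt, hφ'.fderiv]
  simp

theorem tangentialCR_fst_mul (hφ : DifferentiableAt ℂ φ z.1) (hG : DifferentiableAt ℝ G z) :
    tangentialCR (fun z => φ z.1 * G z) z = φ z.1 * tangentialCR G z := by
  have hφ' : DifferentiableAt ℂ (fun z : ℂ × ℂ => φ z.1) z := hφ.comp z differentiableAt_fst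
  have hφℝ := hφ'.restrictScalars ℝ
  simp only [tangentialCR, delBarAlong_mul hφℝ hG, delBarAlong_eq_zero hφ']
  ring

theorem chordMoment_congr (hp : p ^ 2 ≤ 1) {H : ℂ × ℂ → ℂ} (h : EqOn G H (range (chord p)))
    (l : ℂ) : chordMoment p G l = chordMoment p H l := by
  simp only [chordMoment_eq_integral hp, h (mem_range_self _)]

theorem chordMoment_zero_slope (p : ℝ) (G : ℂ × ℂ → ℂ) :
    chordMoment p G 0 = ∮ z in C(0, 1), G (z, 0) := by
  simp [chordMoment, chordCenter, chordRadius]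

theorem delAlong_sub_conj_mul {A R : ℂ → ℂ} {l : ℂ} (hA : DifferentiableAt ℝ A l)
    (hR : DifferentiableAt ℝ R l) :
    delAlong 1 (fun l => A l - conj l * R l) l = delAlong 1 A l - conj l * delAlong 1 R l := by
  have hconj : DifferentiableAt ℝ (fun l : ℂ => conj l) l := Complex.conjCLE.differentiableAt
  have hconj' : delAlong 1 (fun l : ℂ => conj l) l = 0 := by
    have := Complex.conjCLE.fderiv (x := l)
    simp [delAlong, show fderiv ℝ (fun l : ℂ => conj l) l = _ from this]
  rw [delAlong_sub hA (hconj.fun_mul hR), delAlong_mul hconj hR, hconj', mul_zero, add_zero]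

theorem exists_iterate_delAlong_chordMoment_eq (hp : p ^ 2 ≤ 1)
    (hφ : AnalyticOnNhd ℂ φ (range (chordFst p))) (hG : AnalyticOnNhd ℝ G (range (chord p)))
    (n : ℕ) : ∃ R, ContDiff ℝ ω R ∧ ∀ l,
      (delAlong 1)^[n] (chordMoment p fun z => φ z.1 * G z) l =
        chordMoment p (fun z => φ z.1 * (z.1 - p) ^ n * (delAlong (0, 1))^[n] G z) l -
          conj l * R l := by
  induction n with
  | zero => exact ⟨fun _ => 0, contDiff_const, fun l => by simp⟩
  | succ n ih =>
    obtain ⟨R, hR, hiterate⟩ := ih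
    have hφn : AnalyticOnNhd ℂ (fun z => φ z * (z - p) ^ n) (range (chordFst p)) := fun z hz =>
      (hφ z hz).mul ((analyticAt_id.sub analyticAt_const).pow n)
    have hGn := analyticOnNhd_iterate_delAlong hG (0, 1) n
    have hproduct := analyticOnNhd_fst_mul hφn hGn
    refine ⟨fun l => chordRemainder p (fun z => φ z.1 * (z.1 - p) ^ n * _) l + delAlong 1 R l,
      (contDiff_chordRemainder hp hproduct).add (contDiff_delAlong hR 1), fun l => ?_⟩
    rw [Function.iterate_succ_apply', funext hiterate, delAlong_sub_conj_mul
      ((contDiff_chordMoment hp hproduct).differentiable (by simp) l)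
      (hR.differentiable (by simp) l), delAlong_chordMoment hp hproduct, sub_sub, ← mul_add]
    congr 1
    refine chordMoment_congr hp ?_ l
    rintro _ ⟨y, rfl⟩
    have := delAlong_snd_fst_mul (hφn _ (mem_range_self y)).differentiableAt
      (hGn _ (mem_range_self y)).differentiableAt
    simp only [Function.iterate_succ_apply', pow_succ]
    exact (congrArg _ this).trans (by ring)

theorem iterate_delAlong_chordMoment_zero (hp : p ^ 2 ≤ 1)
    (hφ : AnalyticOnNhd ℂ φ (range (chordFst p))) (hG : AnalyticOnNhd ℝ G (range (chord p)))
    (n : ℕ) : (delAlong 1)^[n] (chordMoment p fun z => φ z.1 * G z) 0 =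
      ∮ z in C(0, 1), φ z * (z - p) ^ n * (delAlong (0, 1))^[n] G (z, 0) := by
  obtain ⟨R, -, hR⟩ := exists_iterate_delAlong_chordMoment_eq hp hφ hG n
  rw [hR, map_zero, zero_mul, sub_zero, chordMoment_zero_slope]

theorem delBarAlong_chordMoment_zero (hφ : AnalyticOnNhd ℂ φ (range (chordFst 0)))
    (hG : AnalyticOnNhd ℝ G (range (chord 0))) :
    delBarAlong 1 (chordMoment 0 fun z => φ z.1 * G z) =
      chordMoment 0 fun z => φ z.1 * chartCR G z := by
  funext l
  have hp : (0 : ℝ) ^ 2 ≤ 1 := by norm_num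
  rw [delBarAlong_chordMoment hp (analyticOnNhd_fst_mul hφ hG), chordMoment_eq_integral hp]
  refine intervalIntegral.integral_congr fun θ _ => ?_
  have hweight : chordWeight 0 (θ, l) = conj (chordFst 0 (θ, l)) ^ 2 := by
    have := conj_sub_mul_chordFactor hp (θ, l)
    simp only [Complex.ofReal_zero, sub_zero, zero_mul] at this
    rw [chordWeight, ← eq_inv_of_mul_eq_one_left this, Complex.ofReal_zero, sub_zero, sq]
  simp only [tangentialCR_fst_mul (z := chord 0 (θ, l)) (hφ _ (mem_range_self _)).differentiableAt
    (hG _ (mem_range_self _)).differentiableAt, hweight, chartCR]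
  simp only [chord]
  ring

theorem iterate_delBarAlong_chordMoment_zero (hφ : AnalyticOnNhd ℂ φ (range (chordFst 0)))
    (hG : AnalyticOnNhd ℝ G (range (chord 0))) (n : ℕ) :
    (delBarAlong 1)^[n] (chordMoment 0 fun z => φ z.1 * G z) =
      chordMoment 0 fun z => φ z.1 * chartCR^[n] G z := by
  induction n with
  | zero => rfl
  | succ n ih =>
    rw [Function.iterate_succ_apply', ih,
      delBarAlong_chordMoment_zero hφ (analyticOnNhd_iterate_chartCR hG n),
      Function.iterate_succ_apply']

theorem jet_chordMoment_zero (hφ : AnalyticOnNhd ℂ φ (range (chordFst 0)))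
    (hG : AnalyticOnNhd ℝ G (range (chord 0))) (l n : ℕ) :
    (delAlong 1)^[l] ((delBarAlong 1)^[n] (chordMoment 0 fun z => φ z.1 * G z)) 0 =
      ∮ z in C(0, 1), φ z * z ^ l * circleJet G l n z := by
  rw [iterate_delBarAlong_chordMoment_zero hφ hG, iterate_delAlong_chordMoment_zero (by norm_num)
    hφ (analyticOnNhd_iterate_chartCR hG n)]
  simp [circleJet]

theorem ChordMomentsVanish.mul_chartCR (hp : p ^ 2 ≤ 1)
    (hφ : AnalyticOnNhd ℂ φ (range (chordFst p))) (hG : AnalyticOnNhd ℝ G (range (chord p)))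
    (h : ChordMomentsVanish p fun z => φ z.1 * G z) :
    ChordMomentsVanish p fun z => (1 - p * z.1) * φ z.1 * chartCR G z := by
  intro ψ l
  -- On the chord of slope `l`, `1 + |l|² p (z - p)` is `conj z` times `chordFactor`.
  set χ : ℂ[X] := (1 + C (‖l‖ ^ 2 * p : ℂ) * (X - C (p : ℂ))) ^ 2 * ψ with hχ
  have hχφ : AnalyticOnNhd ℂ (fun z => χ.eval z * φ z) (range (chordFst p)) := fun z hz =>
    (χ.differentiable.analyticAt z).mul (hφ z hz)
  have hmoment : chordMoment p (fun z => χ.eval z.1 * φ z.1 * G z) = 0 :=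
    funext fun l => by simpa only [mul_assoc, Pi.zero_apply] using h χ l
  have hderiv := delBarAlong_chordMoment hp (analyticOnNhd_fst_mul hχφ hG) l
  rw [hmoment, show delBarAlong 1 (0 : ℂ → ℂ) l = 0 by simp [delBarAlong]] at hderiv
  rw [hderiv, chordMoment_eq_integral hp]
  refine intervalIntegral.integral_congr fun θ _ => ?_
  have hweight : chordWeight p (θ, l) * (1 + ‖l‖ ^ 2 * p * (chordFst p (θ, l) - p)) ^ 2 =
      (1 - p * chordFst p (θ, l)) * conj (chordFst p (θ, l)) ^ 2 := by
    have := chordFactor_ne_zero hp (θ, l)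
    rw [← conj_mul_chordFactor hp (θ, l), ← conj_sub_mul_chordFactor hp (θ, l), chordWeight]
    field_simp
  simp only [tangentialCR_fst_mul (z := chord p (θ, l)) (hχφ _ (mem_range_self _)).differentiableAt
    (hG _ (mem_range_self _)).differentiableAt, chartCR]
  simp only [chord, hχ, eval_mul, eval_pow, eval_add, eval_sub, eval_one, eval_C, eval_X]
  linear_combination (-eval (chordFst p (θ, l)) ψ * φ (chordFst p (θ, l)) *
    tangentialCR G (chordFst p (θ, l), l * (chordFst p (θ, l) - p)) *
    fderiv ℝ (chordFst p) (θ, l) (1, 0)) * hweight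

theorem ChordMomentsVanish.iterate_chartCR (hp : p ^ 2 ≤ 1)
    (hG : AnalyticOnNhd ℝ G (range (chord p))) (h : ChordMomentsVanish p G) (n : ℕ) :
    ChordMomentsVanish p fun z => (1 - p * z.1) ^ n * chartCR^[n] G z := by
  induction n with
  | zero => simpa using h
  | succ n ih =>
    have hφ : AnalyticOnNhd ℂ (fun z : ℂ => (1 - p * z) ^ n) (range (chordFst p)) :=
      fun z _ => (analyticAt_const.sub (analyticAt_const.mul analyticAt_id)).pow n
    simpa only [pow_succ', Function.iterate_succ_apply'] using
      ChordMomentsVanish.mul_chartCR hp hφ (analyticOnNhd_iterate_chartCR hG n) ih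

theorem ChordMomentsVanish.circleIntegral_jet (hp : p ^ 2 ≤ 1)
    (hG : AnalyticOnNhd ℝ G (range (chord p))) (h : ChordMomentsVanish p G) (l n : ℕ)
    (ψ : ℂ[X]) :
    ∮ z in C(0, 1), ψ.eval z * (1 - p * z) ^ n * (z - p) ^ l * circleJet G l n z = 0 := by
  have hψ : AnalyticOnNhd ℂ (fun z => ψ.eval z * (1 - p * z) ^ n) (range (chordFst p)) :=
    fun z _ => (ψ.differentiable.analyticAt z).mul
      ((analyticAt_const.sub (analyticAt_const.mul analyticAt_id)).pow n)
  have hmoment : chordMoment p (fun z => ψ.eval z.1 * (1 - p * z.1) ^ n * chartCR^[n] G z) = 0 :=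
    funext fun l => by simpa only [mul_assoc, Pi.zero_apply] using h.iterate_chartCR hp hG n ψ l
  have hzero : (delAlong 1)^[l] (0 : ℂ → ℂ) = 0 :=
    Function.iterate_fixed (by ext z; simp [delAlong]) l
  have hjet := iterate_delAlong_chordMoment_zero hp hψ (analyticOnNhd_iterate_chartCR hG n) l
  rw [hmoment, hzero] at hjet
  exact hjet.symm

end Jets

section CircleMoments

open Polynomial Filter Topology
open scoped Real

variable {h : ℂ → ℂ} {c : ℂ} {R : ℝ}

theorem circleIntegrable_polynomial_mul (hR : 0 ≤ R) (hh : ContinuousOn h (sphere c R))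
    (ψ : ℂ[X]) : CircleIntegrable (fun z => ψ.eval z * h z) c R :=
  (ψ.continuous.continuousOn.mul hh).circleIntegrable hR

theorem circleIntegral_polynomial_mul_eq_zero_of_isCoprime (hR : 0 ≤ R)
    (hh : ContinuousOn h (sphere c R)) {P Q : ℂ[X]} (hPQ : IsCoprime P Q)
    (hP : ∀ ψ : ℂ[X], ∮ z in C(c, R), (ψ * P).eval z * h z = 0)
    (hQ : ∀ ψ : ℂ[X], ∮ z in C(c, R), (ψ * Q).eval z * h z = 0) (ψ : ℂ[X]) :
    ∮ z in C(c, R), ψ.eval z * h z = 0 := by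
  obtain ⟨u, v, huv⟩ := hPQ
  have hψ : ψ = ψ * u * P + ψ * v * Q := by linear_combination -ψ * huv
  rw [hψ]
  simp only [eval_add, add_mul]
  rw [circleIntegral.integral_add (circleIntegrable_polynomial_mul hR hh _)
    (circleIntegrable_polynomial_mul hR hh _), hP, hQ, add_zero]

theorem tendsto_integral_exp_nat_mul (f : ℝ → ℂ) :
    Tendsto (fun k : ℕ => ∫ θ in (0 : ℝ)..2 * π, Complex.exp (k * (θ * Complex.I)) * f θ)
      atTop (𝓝 0) := by
  have hfrequency : Tendsto (fun k : ℕ => -((k : ℝ) / (2 * π))) atTop (cocompact ℝ) :=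
    (tendsto_neg_atTop_atBot.comp (tendsto_natCast_atTop_atTop.atTop_div_const
      Real.two_pi_pos)).mono_right atBot_le_cocompact
  refine ((Real.tendsto_integral_exp_smul_cocompact (indicator (Ioc 0 (2 * π)) f)).comp
    hfrequency).congr fun k => ?_
  rw [intervalIntegral.integral_of_le Real.two_pi_pos.le,
    ← MeasureTheory.integral_indicator measurableSet_Ioc, Function.comp_apply]
  congr 1 with θ
  have hphase : (Real.fourierChar (θ * (k / (2 * π))) : ℂ) =
      Complex.exp (k * (θ * Complex.I)) := by
    have : (π : ℂ) ≠ 0 := Complex.ofReal_ne_zero.2 Real.pi_ne_zero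
    rw [Real.fourierChar_apply]
    push_cast
    field_simp
  by_cases hθ : θ ∈ Ioc 0 (2 * π) <;> simp [hθ, Circle.smul_def, hphase]

theorem tendsto_circleIntegral_pow_mul (h : ℂ → ℂ) :
    Tendsto (fun k : ℕ => ∮ z in C(0, 1), z ^ k * h z) atTop (𝓝 0) := by
  refine (tendsto_integral_exp_nat_mul
    fun θ => deriv (circleMap 0 1) θ * h (circleMap 0 1 θ)).congr fun k =>
      intervalIntegral.integral_congr fun θ _ => ?_
  rw [smul_eq_mul, Complex.exp_nat_mul,
    show Complex.exp (θ * Complex.I) = circleMap 0 1 θ by simp [circleMap]]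
  ring

theorem circleIntegral_polynomial_mul_eq_zero_of_X_sub_one (hh : ContinuousOn h (sphere 0 1))
    (hX : ∀ ψ : ℂ[X], ∮ z in C(0, 1), (ψ * (X - 1)).eval z * h z = 0) (ψ : ℂ[X]) :
    ∮ z in C(0, 1), ψ.eval z * h z = 0 := by
  -- The moments of `z ^ k * ψ` do not depend on `k`, and tend to zero by Riemann–Lebesgue.
  have hψ : ContinuousOn (fun z => ψ.eval z) (sphere 0 1) := ψ.continuous.continuousOn
  have hconst (k : ℕ) : ∮ z in C(0, 1), z ^ k * (ψ.eval z * h z) =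
      ∮ z in C(0, 1), ψ.eval z * h z := by
    induction k with
    | zero => simp
    | succ k ih =>
      rw [← ih, ← sub_eq_zero, ← circleIntegral.integral_sub]
      · refine (circleIntegral.integral_congr zero_le_one fun z _ => ?_).trans (hX (X ^ k * ψ))
        simp only [eval_mul, eval_pow, eval_sub, eval_X, eval_one]
        ring
      · exact ((continuous_pow _).continuousOn.mul (hψ.mul hh)).circleIntegrable zero_le_one
      · exact ((continuous_pow _).continuousOn.mul (hψ.mul hh)).circleIntegrable zero_le_one
  exact tendsto_nhds_unique (tendsto_const_nhds.congr fun k => (hconst k).symm)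
    (tendsto_circleIntegral_pow_mul fun z => ψ.eval z * h z)

theorem circleIntegral_polynomial_mul_eq_zero_of_X_sub_one_pow (hh : ContinuousOn h (sphere 0 1))
    (N : ℕ) (hX : ∀ ψ : ℂ[X], ∮ z in C(0, 1), (ψ * (X - 1) ^ N).eval z * h z = 0) (ψ : ℂ[X]) :
    ∮ z in C(0, 1), ψ.eval z * h z = 0 := by
  induction N generalizing ψ with
  | zero => simpa using hX ψ
  | succ N ih =>
    refine ih (fun ψ => ?_) ψ
    have hpow : Continuous fun z : ℂ => (z - 1) ^ N := by fun_prop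
    have := circleIntegral_polynomial_mul_eq_zero_of_X_sub_one (hpow.continuousOn.fun_mul hh)
      (fun χ => ?_) ψ
    · simpa only [eval_mul, eval_pow, eval_sub, eval_X, eval_one, mul_assoc] using this
    · simpa only [eval_mul, eval_pow, eval_sub, eval_X, eval_one, mul_assoc, pow_succ'] using hX χ

end CircleMoments

section JetMoments

open Polynomial
open scoped Real

/-- All jets of `G` along the circle `{(z, 0) : |z| = 1}` are orthogonal to the polynomials, that
is, they are boundary values of holomorphic functions on the disc. -/
def JetMomentsVanish (G : ℂ × ℂ → ℂ) : Prop :=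
  ∀ (l n : ℕ) (ψ : ℂ[X]), ∮ z in C(0, 1), ψ.eval z * circleJet G l n z = 0

variable {p : ℝ} {G : ℂ × ℂ → ℂ}

theorem range_chord_subset (hp : p ^ 2 ≤ 1) : range (chord p) ⊆ complexSphere :=
  range_subset_iff.2 (chord_mem_complexSphere hp)

theorem continuousOn_circleJet (hG : AnalyticOnNhd ℝ G complexSphere) (l n : ℕ) :
    ContinuousOn (circleJet G l n) (sphere 0 1) :=
  (analyticOnNhd_iterate_delAlong (analyticOnNhd_iterate_chartCR hG n) (0, 1) l).continuousOn.comp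
    (Continuous.prodMk_left 0).continuousOn fun z hz => by
      simp [complexSphere, mem_sphere_zero_iff_norm.1 hz]

theorem ChordMomentsVanish.jetMomentsVanish (hG : AnalyticOnNhd ℝ G complexSphere) (hp : p ^ 2 ≤ 1)
    (hp0 : p ≠ 0) (h0 : ChordMomentsVanish 0 G) (h : ChordMomentsVanish p G) :
    JetMomentsVanish G := by
  intro l n
  have hpC : (C (p : ℂ)⁻¹ * C (p : ℂ) : ℂ[X]) = 1 := by
    rw [← C_mul, inv_mul_cancel₀ (Complex.ofReal_ne_zero.2 hp0), C_1]
  have hcoprime : IsCoprime (X ^ l : ℂ[X]) ((1 - C (p : ℂ) * X) ^ n * (X - C (p : ℂ)) ^ l) :=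
    IsCoprime.pow_left (IsCoprime.mul_right
      (IsCoprime.pow_right ⟨C (p : ℂ), 1, by ring⟩)
      (IsCoprime.pow_right ⟨C (p : ℂ)⁻¹, -C (p : ℂ)⁻¹, by linear_combination hpC⟩))
  refine circleIntegral_polynomial_mul_eq_zero_of_isCoprime zero_le_one
    (continuousOn_circleJet hG l n) hcoprime (fun ψ => ?_) (fun ψ => ?_)
  · have h0sq : (0 : ℝ) ^ 2 ≤ 1 := by norm_num
    simpa using h0.circleIntegral_jet h0sq (hG.mono (range_chord_subset h0sq)) l n ψ
  · simpa [mul_assoc] using h.circleIntegral_jet hp (hG.mono (range_chord_subset hp)) l n ψ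

theorem ChordMomentsVanish.jetMomentsVanish_of_one (hG : AnalyticOnNhd ℝ G complexSphere)
    (h : ChordMomentsVanish 1 G) : JetMomentsVanish G := by
  intro l n
  have hp : (1 : ℝ) ^ 2 ≤ 1 := by norm_num
  refine circleIntegral_polynomial_mul_eq_zero_of_X_sub_one_pow (continuousOn_circleJet hG l n)
    (n + l) fun ψ => ?_
  have hsign : (-1 : ℂ) ^ n * (-1) ^ n = 1 := by simp [← mul_pow]
  refine (circleIntegral.integral_congr zero_le_one fun z _ => ?_).trans
    (h.circleIntegral_jet hp (hG.mono (range_chord_subset hp)) l n (ψ * (-1) ^ n))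
  simp only [eval_mul, eval_pow, eval_neg, eval_sub, eval_X, eval_one, Complex.ofReal_one, one_mul]
  rw [← neg_sub z 1, neg_pow (z - 1), pow_add]
  linear_combination (-eval z ψ * (z - 1) ^ n * (z - 1) ^ l * circleJet G l n z) * hsign

/-- The function `f` on the unit sphere extends continuously to the slice of the closed unit ball by
the complex line through `c` in the direction `v`, holomorphically in the interior. -/
def ExtendsAlongLine {E : Type*} [NormedAddCommGroup E] [NormedSpace ℂ E] (f : E → ℂ) (c v : E) :
    Prop :=
  ∃ F : ℂ → ℂ, ContinuousOn F {t : ℂ | ‖c + t • v‖ ≤ 1} ∧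
    DifferentiableOn ℂ F {t : ℂ | ‖c + t • v‖ < 1} ∧
    ∀ t : ℂ, ‖c + t • v‖ = 1 → F t = f (c + t • v)

theorem norm_sq_add_norm_sq_line (hp : p ^ 2 ≤ 1) (l z : ℂ) :
    ‖z‖ ^ 2 + ‖l * (z - p)‖ ^ 2 =
      1 + (1 + ‖l‖ ^ 2) * (‖z - chordCenter p l‖ ^ 2 - chordRadius p l ^ 2) := by
  have hcenter : chordCenter p l = ((p * ‖l‖ ^ 2 / (1 + ‖l‖ ^ 2) : ℝ) : ℂ) := by
    simp [chordCenter]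
  rw [chordRadius, div_pow, Real.sq_sqrt (chord_discriminant_pos hp l).le, hcenter, norm_mul,
    mul_pow]
  simp only [Complex.sq_norm z, Complex.sq_norm (z - _), Complex.normSq_apply, Complex.sub_re,
    Complex.sub_im, Complex.ofReal_re, Complex.ofReal_im]
  field_simp
  ring

theorem norm_line_sq (hp : p ^ 2 ≤ 1) (l z : ℂ) :
    ‖(!₂[(p : ℂ), 0] : EuclideanSpace ℂ (Fin 2)) + (z - p) • !₂[1, l]‖ ^ 2 =
      1 + (1 + ‖l‖ ^ 2) * (‖z - chordCenter p l‖ ^ 2 - chordRadius p l ^ 2) := by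
  rw [← norm_sq_add_norm_sq_line hp, EuclideanSpace.norm_sq_eq]
  simp [mul_comm]

theorem ExtendsAlongLine.chordMoment_eq_zero (hp : p ^ 2 ≤ 1) {l : ℂ}
    {f : EuclideanSpace ℂ (Fin 2) → ℂ} (h : ExtendsAlongLine f !₂[(p : ℂ), 0] !₂[1, l])
    (ψ : ℂ[X]) : chordMoment p (fun z => ψ.eval z.1 * f !₂[z.1, z.2]) l = 0 := by
  obtain ⟨F, hF, hF', hFf⟩ := h
  have hsub : Differentiable ℂ fun z : ℂ => z - p := by fun_prop
  have hclosed : MapsTo (fun z : ℂ => z - p) (closedBall (chordCenter p l) (chordRadius p l))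
      {t : ℂ | ‖(!₂[(p : ℂ), 0] : EuclideanSpace ℂ (Fin 2)) + t • !₂[1, l]‖ ≤ 1} := by
    intro z hz
    rw [mem_closedBall_iff_norm, ← sq_le_sq₀ (norm_nonneg _) (chordRadius_pos hp l).le] at hz
    rw [mem_ofPred_eq, ← sq_le_one_iff₀ (norm_nonneg _), norm_line_sq hp]
    nlinarith [sq_nonneg ‖l‖]
  have hopen : MapsTo (fun z : ℂ => z - p) (ball (chordCenter p l) (chordRadius p l))
      {t : ℂ | ‖(!₂[(p : ℂ), 0] : EuclideanSpace ℂ (Fin 2)) + t • !₂[1, l]‖ < 1} := by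
    intro z hz
    rw [mem_ball_iff_norm, ← sq_lt_sq₀ (norm_nonneg _) (chordRadius_pos hp l).le] at hz
    rw [mem_ofPred_eq, ← sq_lt_one_iff₀ (norm_nonneg _), norm_line_sq hp]
    nlinarith [sq_nonneg ‖l‖]
  rw [← Complex.circleIntegral_eq_zero_of_differentiable_on_off_countable
    (f := fun z => ψ.eval z * F (z - p)) (chordRadius_pos hp l).le countable_empty
    (ψ.continuous.continuousOn.mul (hF.comp hsub.continuous.continuousOn hclosed))
    fun z hz => ψ.differentiableAt.mul ((hF'.comp hsub.differentiableOn hopen).differentiableAt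
      (isOpen_ball.mem_nhds hz.1))]
  refine circleIntegral.integral_congr (chordRadius_pos hp l).le fun z hz => ?_
  have hz1 : ‖(!₂[(p : ℂ), 0] : EuclideanSpace ℂ (Fin 2)) + (z - p) • !₂[1, l]‖ = 1 := by
    rw [← pow_eq_one_iff_of_nonneg (norm_nonneg _) two_ne_zero, norm_line_sq hp,
      mem_sphere_iff_norm.1 hz]
    ring
  have hpoint : (!₂[(p : ℂ), 0] : EuclideanSpace ℂ (Fin 2)) + (z - p) • !₂[1, l] =
      !₂[z, l * (z - p)] := by
    ext i
    fin_cases i <;> simp [mul_comm]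
  simp only [hFf _ hz1, hpoint]

end JetMoments

section HomogeneousComponents

open Finset (range)
open scoped ContDiff Real

/-- The component of `f` on which the rotation by `ζ` acts as `ζ ^ d`. -/
noncomputable def homogeneousComponent {E : Type*} [AddCommGroup E] [Module ℂ E] (d : ℤ)
    (f : E → ℂ) (z : E) : ℂ :=
  ∮ ζ in C(0, 1), (2 * π * Complex.I)⁻¹ * ζ ^ (-d - 1) * f (ζ • z)

/-- The component of `G` of degree `d` in the chart `z₂ / z₁`, that is, divided by `z₁ ^ d`. -/
noncomputable def slopeComponent (d : ℤ) (G : ℂ × ℂ → ℂ) : ℂ → ℂ :=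
  chordMoment 0 fun z => (2 * π * Complex.I)⁻¹ * z.1 ^ (-d - 1) * G z

variable {G : ℂ × ℂ → ℂ} {z : ℂ × ℂ}

theorem circleIntegral_norm_mul (f : ℂ → ℂ) (w : ℂ) (R : ℝ) :
    ∮ z in C(0, ‖w‖ * R), f z = w * ∮ ζ in C(0, R), f (w * ζ) := by
  have hrotate (θ : ℝ) : circleMap 0 (‖w‖ * R) (θ + w.arg) = w * circleMap 0 R θ := by
    rw [circleMap_zero, circleMap_zero, Complex.ofReal_add, add_mul, Complex.exp_add]
    conv_rhs => rw [← Complex.norm_mul_exp_arg_mul_I w]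
    push_cast
    ring
  have hperiodic : Function.Periodic
      (fun θ => deriv (circleMap 0 (‖w‖ * R)) θ • f (circleMap 0 (‖w‖ * R) θ)) (2 * π) := by
    intro θ
    simp only [deriv_circleMap, periodic_circleMap _ _ θ]
  have hshift := hperiodic.intervalIntegral_add_eq 0 w.arg
  have htranslate := intervalIntegral.integral_comp_add_right (a := 0) (b := 2 * π)
    (fun θ => deriv (circleMap 0 (‖w‖ * R)) θ • f (circleMap 0 (‖w‖ * R) θ)) w.arg
  rw [zero_add, add_comm w.arg] at hshift
  rw [zero_add, ← hshift] at htranslate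
  rw [circleIntegral, ← htranslate, circleIntegral, ← intervalIntegral.integral_const_mul]
  refine intervalIntegral.integral_congr fun θ _ => ?_
  simp only [deriv_circleMap, hrotate, smul_eq_mul]
  ring

theorem chordRadius_zero_div (hz : z ∈ complexSphere) (hz1 : z.1 ≠ 0) :
    chordRadius 0 (z.2 / z.1) = ‖z.1‖ := by
  have hpos : 0 < ‖z.1‖ := norm_pos_iff.2 hz1
  have hsq : 1 + ‖z.2 / z.1‖ ^ 2 = (‖z.1‖⁻¹) ^ 2 := by
    rw [norm_div]
    field_simp
    exact hz
  simp only [chordRadius, ne_eq, OfNat.ofNat_ne_zero, not_false_eq_true, zero_pow, sub_zero,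
    mul_one, hsq, Real.sqrt_sq (inv_pos.2 hpos).le]
  field_simp

theorem homogeneousComponent_eq_mul_slopeComponent (d : ℤ) (hz : z ∈ complexSphere)
    (hz1 : z.1 ≠ 0) :
    homogeneousComponent d G z = z.1 ^ d * slopeComponent d G (z.2 / z.1) := by
  have hcircle := circleIntegral_norm_mul
    (fun w => (2 * π * Complex.I)⁻¹ * w ^ (-d - 1) * G (w, z.2 / z.1 * w)) z.1 1
  simp only [slopeComponent, chordMoment, chordRadius_zero_div hz hz1, chordCenter,
    Complex.ofReal_zero, zero_mul, zero_div, sub_zero]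
  rw [mul_one] at hcircle
  rw [hcircle, homogeneousComponent, ← circleIntegral.integral_const_mul,
    ← circleIntegral.integral_const_mul]
  refine circleIntegral.integral_congr zero_le_one fun ζ _ => ?_
  have hpoint : (z.1 * ζ, z.2 / z.1 * (z.1 * ζ)) = ζ • z :=
    Prod.ext (by simp [mul_comm]) (by simp; field_simp)
  have hpower : z.1 ^ d * z.1 * z.1 ^ (-d - 1) = 1 := by
    rw [← zpow_add_one₀ hz1, ← zpow_add₀ hz1]
    simp
  simp only [hpoint, mul_zpow]
  linear_combination (-(2 * π * Complex.I)⁻¹ * ζ ^ (-d - 1) * G (ζ • z)) * hpower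

theorem homogeneousComponent_swap (d : ℤ) (G : ℂ × ℂ → ℂ) (z : ℂ × ℂ) :
    homogeneousComponent d (fun z => G z.swap) z.swap = homogeneousComponent d G z := rfl

theorem swap_mem_complexSphere (hz : z ∈ complexSphere) : z.swap ∈ complexSphere :=
  (add_comm _ _).trans hz

theorem analyticOnNhd_comp_swap (hG : AnalyticOnNhd ℝ G complexSphere) :
    AnalyticOnNhd ℝ (fun z => G z.swap) complexSphere := fun z hz =>
  (hG z.swap (swap_mem_complexSphere hz)).fun_comp
    ((ContinuousLinearEquiv.prodComm ℝ ℂ ℂ).toContinuousLinearMap.analyticAt z)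

theorem chordFst_zero_ne_zero (y : ℝ × ℂ) : chordFst 0 y ≠ 0 := by
  intro h
  simpa [h] using conj_sub_mul_chordFactor (p := 0) (by norm_num) y

theorem slopeComponent_inv (d : ℤ) (G : ℂ × ℂ → ℂ) {l : ℂ} (hl : l ≠ 0) :
    slopeComponent d G l = l ^ d * slopeComponent d (fun z => G z.swap) l⁻¹ := by
  have hz := chord_mem_complexSphere (p := 0) (by norm_num) (0, l)
  have hz1 := chordFst_zero_ne_zero (0, l)
  set w := chordFst 0 (0, l)
  have hchord : chord 0 (0, l) = (w, l * w) := by simp [chord, w]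
  rw [hchord] at hz
  have hw := homogeneousComponent_eq_mul_slopeComponent (G := G) d hz hz1
  rw [← homogeneousComponent_swap, homogeneousComponent_eq_mul_slopeComponent d
    (swap_mem_complexSphere hz) (mul_ne_zero hl hz1)] at hw
  simp only [Prod.fst_swap, Prod.snd_swap, mul_div_cancel_right₀ _ hz1, mul_zpow,
    div_mul_cancel_right₀ hz1] at hw
  apply mul_left_cancel₀ (zpow_ne_zero d hz1)
  linear_combination -hw

theorem analyticOnNhd_zpow_chordFst (d : ℤ) :
    AnalyticOnNhd ℂ (fun z => (2 * π * Complex.I)⁻¹ * z ^ (-d - 1)) (Set.range (chordFst 0)) := by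
  rintro _ ⟨y, rfl⟩
  exact analyticAt_const.mul (analyticAt_id.zpow (chordFst_zero_ne_zero y))

theorem contDiff_slopeComponent (hG : AnalyticOnNhd ℝ G complexSphere) (d : ℤ) :
    ContDiff ℝ ω (slopeComponent d G) :=
  contDiff_chordMoment (by norm_num) (analyticOnNhd_fst_mul (analyticOnNhd_zpow_chordFst d)
    (hG.mono (range_chord_subset (by norm_num))))

theorem JetMomentsVanish.jet_slopeComponent (hG : AnalyticOnNhd ℝ G complexSphere)
    (h : JetMomentsVanish G) {d : ℤ} {l : ℕ} (hl : d < l) (n : ℕ) :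
    (delAlong 1)^[l] ((delBarAlong 1)^[n] (slopeComponent d G)) 0 = 0 := by
  obtain ⟨k, hk⟩ := Int.le.dest hl
  rw [slopeComponent, jet_chordMoment_zero (analyticOnNhd_zpow_chordFst d)
    (hG.mono (range_chord_subset (by norm_num)))]
  refine Eq.trans (circleIntegral.integral_congr zero_le_one fun z hz => ?_)
    (h l n (.C (2 * π * Complex.I)⁻¹ * .X ^ k))
  have hz0 : z ≠ 0 := ne_zero_of_mem_unit_sphere ⟨z, hz⟩
  have hpower : z ^ (-d - 1) * z ^ l = z ^ k := by
    rw [← zpow_natCast, ← zpow_natCast, ← zpow_add₀ hz0]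
    congr 1
    lia
  simp only [Polynomial.eval_mul, Polynomial.eval_C, Polynomial.eval_pow, Polynomial.eval_X,
    ← hpower, mul_assoc]

theorem JetMomentsVanish.iterate_delAlong_slopeComponent (hG : AnalyticOnNhd ℝ G complexSphere)
    (h : JetMomentsVanish G) {d : ℤ} {N : ℕ} (hN : d < N) :
    (delAlong 1)^[N] (slopeComponent d G) = 0 := by
  have hq := contDiff_slopeComponent hG d
  refine eq_zero_of_jet_eq_zero (contDiff_iterate_delAlong hq 1 N) fun l n => ?_
  rw [iterate_delBarAlong_iterate_delAlong hq, ← Function.iterate_add_apply]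
  exact h.jet_slopeComponent hG (by lia) n

theorem slopeComponent_swap_eq (hG : AnalyticOnNhd ℝ G complexSphere) {d : ℤ} {r : ℂ → ℂ}
    (hr : Continuous r) (h : ∀ l ≠ 0, r l = l ^ d * slopeComponent d G l⁻¹) :
    slopeComponent d (fun z => G z.swap) = r :=
  (contDiff_slopeComponent (analyticOnNhd_comp_swap hG) d).continuous.ext_on
    (dense_compl_singleton 0) hr fun l hl =>
      (slopeComponent_inv d (fun z => G z.swap) hl).trans (h l hl).symm

theorem homogeneousComponent_eq_mul_slopeComponent_swap (d : ℤ) (hz : z ∈ complexSphere)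
    (hz1 : z.1 = 0) :
    homogeneousComponent d G z = z.2 ^ d * slopeComponent d (fun z => G z.swap) 0 := by
  have hz2 : z.2 ≠ 0 := fun hz2 => by simp [complexSphere, hz1, hz2] at hz
  rw [← homogeneousComponent_swap, homogeneousComponent_eq_mul_slopeComponent d
    (swap_mem_complexSphere hz) hz2]
  simp [hz1]

theorem JetMomentsVanish.homogeneousComponent_eq_zero (hG : AnalyticOnNhd ℝ G complexSphere)
    (h : JetMomentsVanish G) {d : ℤ} (hd : d < 0) (hz : z ∈ complexSphere) :
    homogeneousComponent d G z = 0 := by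
  have hzero : slopeComponent d G = 0 := h.iterate_delAlong_slopeComponent hG (N := 0) hd
  by_cases hz1 : z.1 = 0
  · rw [homogeneousComponent_eq_mul_slopeComponent_swap d hz hz1, slopeComponent_swap_eq hG
      (continuous_const (y := 0)) (by simp [hzero]), mul_zero]
  · rw [homogeneousComponent_eq_mul_slopeComponent d hz hz1, hzero, Pi.zero_apply, mul_zero]

theorem pow_mul_sum_eq_sum_pow (c : ℕ → ℂ) (d : ℕ) {x : ℂ} (hx : x ≠ 0) (y : ℂ) :
    x ^ d * ∑ j ∈ range (d + 1), c j * (y / x) ^ j =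
      ∑ j ∈ range (d + 1), c j * x ^ (d - j) * y ^ j := by
  rw [Finset.mul_sum]
  refine Finset.sum_congr rfl fun j hj => ?_
  rw [pow_sub₀ x hx (Finset.mem_range_succ_iff.1 hj), div_pow]
  ring

theorem JetMomentsVanish.exists_homogeneousComponent_eq_sum
    (hG : AnalyticOnNhd ℝ G complexSphere) (h : JetMomentsVanish G) (d : ℕ) :
    ∃ c : ℕ → ℂ, ∀ z ∈ complexSphere, homogeneousComponent d G z =
      ∑ j ∈ range (d + 1), c j * z.1 ^ (d - j) * z.2 ^ j := by
  obtain ⟨c, hc⟩ := exists_eq_sum_of_reciprocal (contDiff_slopeComponent hG d)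
    (contDiff_slopeComponent (analyticOnNhd_comp_swap hG) d)
    (h.iterate_delAlong_slopeComponent hG (mod_cast d.lt_succ_self))
    (fun l hl => by simpa using slopeComponent_inv d G hl)
  refine ⟨c, fun z hz => ?_⟩
  by_cases hz1 : z.1 = 0
  · have hswap := slopeComponent_swap_eq hG (d := d)
      (r := fun l => ∑ j ∈ range (d + 1), c j * l ^ (d - j) * 1 ^ j) (by fun_prop) fun l hl => by
        rw [hc, zpow_natCast, ← one_div, pow_mul_sum_eq_sum_pow c d hl]
    rw [homogeneousComponent_eq_mul_slopeComponent_swap d hz hz1, hswap, hz1, zpow_natCast]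
    beta_reduce
    rw [Finset.sum_range_succ, Finset.sum_range_succ, Finset.sum_eq_zero, Finset.sum_eq_zero]
    · simp [mul_comm]
    all_goals
      intro j hj
      simp [Nat.sub_ne_zero_of_lt (Finset.mem_range.1 hj)]
  · rw [homogeneousComponent_eq_mul_slopeComponent d hz hz1, hc, zpow_natCast,
      pow_mul_sum_eq_sum_pow c d hz1]

end HomogeneousComponents

section FourierSeries

open scoped Real

variable {E : Type*} [NormedAddCommGroup E] [NormedSpace ℂ E] {f : E → ℂ} {z : E}

/-- The derivative of `f` along the action of the unit circle by rotations. -/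
noncomputable def angularDeriv (f : E → ℂ) (z : E) : ℂ :=
  fderiv ℝ f z (Complex.I • z)

theorem analyticOnNhd_angularDeriv {s : Set E} (hf : AnalyticOnNhd ℝ f s) :
    AnalyticOnNhd ℝ (angularDeriv f) s := fun z hz =>
  have hI : AnalyticAt ℝ (fun w : E => Complex.I • w) z :=
    ((Complex.I • ContinuousLinearMap.id ℂ E).restrictScalars ℝ).analyticAt z
  ((ContinuousLinearMap.apply ℝ ℂ).flip.analyticAt_bilinear _).comp ((hf z hz).fderiv.prod hI)

theorem circleMap_smul_mem_sphere (hz : z ∈ sphere (0 : E) 1) (θ : ℝ) :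
    circleMap 0 1 θ • z ∈ sphere (0 : E) 1 := by
  simpa [norm_smul] using hz

theorem hasDerivAt_comp_circleMap_smul {θ : ℝ}
    (hf : DifferentiableAt ℝ f (circleMap 0 1 θ • z)) :
    HasDerivAt (fun θ => f (circleMap 0 1 θ • z)) (angularDeriv f (circleMap 0 1 θ • z)) θ := by
  have := hf.hasFDerivAt.comp_hasDerivAt θ ((hasDerivAt_circleMap 0 1 θ).smul_const z)
  rwa [mul_comm, mul_smul] at this

theorem fourier_two_pi_coe (n : ℤ) (θ : ℝ) :
    fourier n (θ : AddCircle (2 * π)) = circleMap 0 1 θ ^ n := by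
  have : (π : ℂ) ≠ 0 := Complex.ofReal_ne_zero.2 Real.pi_ne_zero
  rw [fourier_coe_apply, circleMap_zero, Complex.ofReal_one, one_mul, ← Complex.exp_int_mul]
  push_cast
  field_simp

theorem homogeneousComponent_eq_integral (d : ℤ) (f : E → ℂ) (z : E) :
    homogeneousComponent d f z =
      (1 / (2 * π)) • ∫ θ in (0 : ℝ)..2 * π,
        fourier (-d) (θ : AddCircle (2 * π)) • f (circleMap 0 1 θ • z) := by
  rw [homogeneousComponent, circleIntegral, ← intervalIntegral.integral_smul]
  refine intervalIntegral.integral_congr fun θ _ => ?_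
  have hθ : circleMap 0 1 θ ≠ 0 := circleMap_ne_center one_ne_zero
  have : (π : ℂ) ≠ 0 := Complex.ofReal_ne_zero.2 Real.pi_ne_zero
  simp only [deriv_circleMap, fourier_two_pi_coe, zpow_sub_one₀ hθ, smul_eq_mul,
    Complex.real_smul]
  push_cast
  field_simp

theorem homogeneousComponent_eq_fourierCoeffOn (d : ℤ) (f : E → ℂ) (z : E) :
    homogeneousComponent d f z =
      fourierCoeffOn Real.two_pi_pos (fun θ => f (circleMap 0 1 θ • z)) d := by
  rw [homogeneousComponent_eq_integral, fourierCoeffOn_eq_integral, sub_zero]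

theorem hasSum_homogeneousComponent (hf : Continuous fun θ => f (circleMap 0 1 θ • z))
    (hsum : Summable fun d => homogeneousComponent d f z) :
    HasSum (fun d => homogeneousComponent d f z) (f z) := by
  have : Fact (0 < 2 * π) := ⟨Real.two_pi_pos⟩
  have hperiodic : Function.Periodic (fun θ => f (circleMap 0 1 θ • z)) (2 * π) := fun θ => by
    simp only [periodic_circleMap _ _ θ]
  let g : C(AddCircle (2 * π), ℂ) := ⟨hperiodic.lift, continuous_coinduced_dom.2 hf⟩
  have hcoeff : fourierCoeff g = fun d => homogeneousComponent d f z := by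
    ext d
    rw [fourierCoeff_eq_intervalIntegral g d 0, homogeneousComponent_eq_integral, zero_add]
    rfl
  have hg := has_pointwise_sum_fourier_series_of_summable (hcoeff ▸ hsum) (0 : ℝ)
  have hg0 : g (0 : ℝ) = f z := by
    rw [show g (0 : ℝ) = f (circleMap 0 1 0 • z) from rfl, circleMap_zero]
    simp
  rw [hg0, hcoeff] at hg
  simpa [fourier_two_pi_coe, circleMap_zero] using hg

theorem homogeneousComponent_angularDeriv (hf : AnalyticOnNhd ℝ f (sphere 0 1))
    (hz : z ∈ sphere (0 : E) 1) {d : ℤ} (hd : d ≠ 0) :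
    homogeneousComponent d (angularDeriv f) z = Complex.I * d * homogeneousComponent d f z := by
  have hf' (θ : ℝ) := circleMap_smul_mem_sphere hz θ
  have hcont : Continuous fun θ => angularDeriv f (circleMap 0 1 θ • z) :=
    (analyticOnNhd_angularDeriv hf).continuousOn.comp_continuous (by fun_prop) hf'
  have := fourierCoeffOn_of_hasDerivAt Real.two_pi_pos hd
    (fun θ _ => hasDerivAt_comp_circleMap_smul (hf _ (hf' θ)).differentiableAt)
    (hcont.intervalIntegrable _ _)
  have hπ : (π : ℂ) ≠ 0 := Complex.ofReal_ne_zero.2 Real.pi_ne_zero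
  have hdC : (d : ℂ) ≠ 0 := Int.cast_ne_zero.2 hd
  rw [homogeneousComponent_eq_fourierCoeffOn, homogeneousComponent_eq_fourierCoeffOn, this]
  have hends : circleMap 0 1 (2 * π) = circleMap 0 1 0 := by simp [circleMap]
  simp only [hends, sub_self, mul_zero, zero_sub, Complex.ofReal_zero, sub_zero]
  push_cast
  field_simp

theorem norm_homogeneousComponent_le {M : ℝ} (hM : ∀ w ∈ sphere (0 : E) 1, ‖f w‖ ≤ M)
    (hz : z ∈ sphere (0 : E) 1) (d : ℤ) : ‖homogeneousComponent d f z‖ ≤ M := by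
  have hbound := intervalIntegral.norm_integral_le_of_norm_le_const (a := 0) (b := 2 * π) (C := M)
    (f := fun θ => fourier (-d) (θ : AddCircle (2 * π)) • f (circleMap 0 1 θ • z)) fun θ _ => by
      rw [fourier_two_pi_coe, norm_smul, norm_zpow, norm_circleMap_zero, abs_one, one_zpow, one_mul]
      exact hM _ (circleMap_smul_mem_sphere hz θ)
  rw [sub_zero, abs_of_pos Real.two_pi_pos] at hbound
  rw [homogeneousComponent_eq_integral, norm_smul, Real.norm_of_nonneg (by positivity), one_div,
    inv_mul_le_iff₀ Real.two_pi_pos]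
  linarith

theorem exists_summable_norm_homogeneousComponent_le [ProperSpace E]
    (hf : AnalyticOnNhd ℝ f (sphere 0 1)) :
    ∃ u : ℤ → ℝ, Summable u ∧
      ∀ d, ∀ z ∈ sphere (0 : E) 1, ‖homogeneousComponent d f z‖ ≤ u d := by
  have hf' := analyticOnNhd_angularDeriv hf
  obtain ⟨M, hM⟩ := (isCompact_sphere (0 : E) 1).exists_bound_of_continuousOn hf.continuousOn
  obtain ⟨N, hN⟩ := (isCompact_sphere (0 : E) 1).exists_bound_of_continuousOn
    (analyticOnNhd_angularDeriv hf').continuousOn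
  refine ⟨fun d => (Pi.single 0 M : ℤ → ℝ) d + N * (1 / (d : ℝ) ^ 2),
    (hasSum_pi_single 0 M).summable.add ((Real.summable_one_div_int_pow.2 one_lt_two).mul_left N),
    fun d z hz => ?_⟩
  obtain rfl | hd := eq_or_ne d 0
  · simpa using norm_homogeneousComponent_le hM hz 0
  · have hsq : 0 < (d : ℝ) ^ 2 := by positivity
    have hbound := norm_homogeneousComponent_le hN hz d
    rw [homogeneousComponent_angularDeriv hf' hz hd, homogeneousComponent_angularDeriv hf hz hd,
      ← mul_assoc, norm_mul] at hbound
    have hnorm : ‖Complex.I * d * (Complex.I * d)‖ = (d : ℝ) ^ 2 := by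
      simp [Complex.norm_intCast, ← sq]
    rw [hnorm] at hbound
    beta_reduce
    rw [Pi.single_eq_of_ne hd, zero_add, mul_one_div, le_div_iff₀' hsq]
    exact hbound

end FourierSeries

section HolomorphicSeries

variable {E : Type*} [NormedAddCommGroup E] [NormedSpace ℂ E]

theorem norm_fderiv_le_of_norm_le {f : E → ℂ} {x : E} {r M : ℝ} (hr : 0 < r)
    (hf : DifferentiableOn ℂ f (ball x r)) (hM : ∀ y ∈ ball x r, ‖f y‖ ≤ M) :
    ‖fderiv ℂ f x‖ ≤ 2 * M / r := by
  refine Complex.norm_fderiv_le_div_of_mapsTo_ball hf (fun y hy => ?_) hr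
  rw [mem_closedBall_iff_norm, two_mul]
  exact (norm_sub_le _ _).trans (add_le_add (hM y hy) (hM x (mem_ball_self hr)))

theorem differentiableOn_tsum_of_norm_le {ι : Type*} {g : ι → E → ℂ} {u : ι → ℝ} {s : Set E}
    (hu : Summable u) (hs : IsOpen s) (hg : ∀ i, DifferentiableOn ℂ (g i) s)
    (hgu : ∀ i, ∀ z ∈ s, ‖g i z‖ ≤ u i) : DifferentiableOn ℂ (fun z => ∑' i, g i z) s := by
  intro x hx
  obtain ⟨r, hr, hrs⟩ := isOpen_iff.1 hs x hx
  have hball (y : E) (hy : y ∈ ball x (r / 2)) : ball y (r / 2) ⊆ s :=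
    (ball_subset_ball' (by linarith [mem_ball.1 hy])).trans hrs
  have hderiv : HasFDerivAt (fun z => ∑' i, g i z) (∑' i, fderiv ℂ (g i) x) x :=
    hasFDerivAt_tsum_of_isPreconnected ((hu.mul_left 2).div_const (r / 2)) isOpen_ball
      (convex_ball x (r / 2)).isPreconnected
      (fun i y hy => ((hg i).differentiableAt
        (hs.mem_nhds (hball y hy (mem_ball_self (half_pos hr))))).hasFDerivAt)
      (fun i y hy => norm_fderiv_le_of_norm_le (half_pos hr) ((hg i).mono (hball y hy))
        fun w hw => hgu i w (hball y hy hw))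
      (mem_ball_self (half_pos hr)) (hu.of_norm_bounded fun i => hgu i x hx)
      (mem_ball_self (half_pos hr))
  exact hderiv.differentiableAt.differentiableWithinAt

/-- The function `f` on the unit sphere is the boundary value of a function holomorphic in the unit
ball and continuous up to the boundary. -/
def ExtendsToBall (f : E → ℂ) : Prop :=
  ∃ F : E → ℂ, ContinuousOn F (closedBall (0 : E) 1) ∧ DifferentiableOn ℂ F (ball (0 : E) 1) ∧
    EqOn F f (sphere (0 : E) 1)

theorem norm_le_of_homogeneous [Nontrivial E] {P : E → ℂ} {d : ℕ} {M : ℝ}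
    (hP : ∀ (t : ℂ) (w : E), P (t • w) = t ^ d * P w) (hM : ∀ z ∈ sphere (0 : E) 1, ‖P z‖ ≤ M)
    {w : E} (hw : w ∈ closedBall (0 : E) 1) : ‖P w‖ ≤ M := by
  obtain ⟨z, hz, hwz⟩ : ∃ z ∈ sphere (0 : E) 1, w = (‖w‖ : ℂ) • z := by
    obtain rfl | hw0 := eq_or_ne w 0
    · obtain ⟨z, hz⟩ := NormedSpace.sphere_nonempty (x := (0 : E)).2 zero_le_one
      exact ⟨z, hz, by simp⟩
    · refine ⟨(‖w‖ : ℂ)⁻¹ • w, ?_, ?_⟩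
      · simp [norm_smul, norm_ne_zero_iff.2 hw0]
      · rw [smul_inv_smul₀ (by simpa using hw0)]
  rw [hwz, hP, norm_mul, norm_pow, Complex.norm_real, norm_norm]
  exact (mul_le_of_le_one_left (norm_nonneg _) (pow_le_one₀ (norm_nonneg w)
    (mem_closedBall_zero_iff.1 hw))).trans (hM z hz)

theorem extendsToBall_of_homogeneousComponent_eq [Nontrivial E] [ProperSpace E] {f : E → ℂ}
    (hf : AnalyticOnNhd ℝ f (sphere 0 1))
    (hneg : ∀ d < 0, ∀ z ∈ sphere (0 : E) 1, homogeneousComponent d f z = 0) (P : ℕ → E → ℂ)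
    (hdiff : ∀ d, Differentiable ℂ (P d))
    (hhom : ∀ (d : ℕ) (t : ℂ) (w : E), P d (t • w) = t ^ d * P d w)
    (hPf : ∀ d : ℕ, ∀ z ∈ sphere (0 : E) 1, homogeneousComponent d f z = P d z) :
    ExtendsToBall f := by
  obtain ⟨u, hu, hfu⟩ := exists_summable_norm_homogeneousComponent_le hf
  have huNat : Summable fun d : ℕ => u d := hu.comp_injective Nat.cast_injective
  have hPu (d : ℕ) (w : E) (hw : w ∈ closedBall (0 : E) 1) : ‖P d w‖ ≤ u d :=
    norm_le_of_homogeneous (hhom d) (fun z hz => hPf d z hz ▸ hfu d z hz) hw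
  refine ⟨fun w => ∑' d, P d w,
    continuousOn_tsum (fun d => (hdiff d).continuous.continuousOn) huNat hPu,
    differentiableOn_tsum_of_norm_le huNat isOpen_ball (fun d => (hdiff d).differentiableOn)
      fun d w hw => hPu d w (ball_subset_closedBall hw), fun z hz => ?_⟩
  have hcont : Continuous fun θ => f (circleMap 0 1 θ • z) :=
    hf.continuousOn.comp_continuous (by fun_prop) (circleMap_smul_mem_sphere hz)
  have hsum := hasSum_homogeneousComponent hcont (hu.of_norm_bounded fun d => hfu d z hz)
  rw [← (Nat.cast_injective (R := ℤ)).hasSum_iff fun d hd => hneg d (not_le.1 fun h0 =>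
    hd (Int.eq_ofNat_of_zero_le h0 |>.imp fun _ => Eq.symm)) z hz] at hsum
  rw [← hsum.tsum_eq]
  exact tsum_congr fun d => (hPf d z hz).symm

end HolomorphicSeries

section ExtensionInCoordinates

open Finset (range)
open scoped ContDiff

variable {f : EuclideanSpace ℂ (Fin 2) → ℂ}

theorem mem_sphere_iff_mem_complexSphere {z : ℂ × ℂ} :
    !₂[z.1, z.2] ∈ sphere (0 : EuclideanSpace ℂ (Fin 2)) 1 ↔ z ∈ complexSphere := by
  rw [mem_sphere_zero_iff_norm, ← pow_eq_one_iff_of_nonneg (norm_nonneg _) two_ne_zero,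
    EuclideanSpace.norm_sq_eq, Fin.sum_univ_two]
  rfl

theorem analyticOnNhd_comp_coordinates
    (hf : AnalyticOnNhd ℝ f (sphere (0 : EuclideanSpace ℂ (Fin 2)) 1)) :
    AnalyticOnNhd ℝ (fun z : ℂ × ℂ => f !₂[z.1, z.2]) complexSphere := by
  have hcoord : ContDiff ℝ ω fun z : ℂ × ℂ => (!₂[z.1, z.2] : EuclideanSpace ℂ (Fin 2)) :=
    (contDiff_piLp 2).2 fun i => by
      fin_cases i
      · exact contDiff_fst
      · exact contDiff_snd
  exact hf.comp ((contDiff_omega_iff_analyticOnNhd.1 hcoord).mono (subset_univ _))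
    fun z => mem_sphere_iff_mem_complexSphere.2

theorem coordinates_eq_self (w : EuclideanSpace ℂ (Fin 2)) : !₂[w 0, w 1] = w := by
  ext i
  fin_cases i <;> rfl

theorem homogeneousComponent_coordinates (d : ℤ) (f : EuclideanSpace ℂ (Fin 2) → ℂ)
    (w : EuclideanSpace ℂ (Fin 2)) :
    homogeneousComponent d (fun z : ℂ × ℂ => f !₂[z.1, z.2]) (w 0, w 1) =
      homogeneousComponent d f w := by
  have hcoord (ζ : ℂ) : !₂[ζ * w 0, ζ * w 1] = ζ • w := coordinates_eq_self (ζ • w)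
  simp only [homogeneousComponent, Prod.smul_mk, smul_eq_mul, hcoord]

theorem JetMomentsVanish.extendsToBall
    (hf : AnalyticOnNhd ℝ f (sphere (0 : EuclideanSpace ℂ (Fin 2)) 1))
    (h : JetMomentsVanish fun z => f !₂[z.1, z.2]) : ExtendsToBall f := by
  have hG := analyticOnNhd_comp_coordinates hf
  have hcoord (w : EuclideanSpace ℂ (Fin 2)) (hw : w ∈ sphere 0 1) :
      (w 0, w 1) ∈ complexSphere := by
    rwa [← mem_sphere_iff_mem_complexSphere, coordinates_eq_self]
  choose c hc using h.exists_homogeneousComponent_eq_sum hG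
  refine extendsToBall_of_homogeneousComponent_eq hf (fun d hd w hw => ?_)
    (fun d w => ∑ j ∈ range (d + 1), c d j * w 0 ^ (d - j) * w 1 ^ j) (fun d => by fun_prop)
    (fun d t w => ?_) fun d w hw => ?_
  · rw [← homogeneousComponent_coordinates, h.homogeneousComponent_eq_zero hG hd (hcoord w hw)]
  · rw [Finset.mul_sum]
    refine Finset.sum_congr rfl fun j hj => ?_
    rw [← pow_sub_mul_pow t (Finset.mem_range_succ_iff.1 hj)]
    simp only [PiLp.smul_apply, smul_eq_mul, mul_pow]
    ring
  · rw [← homogeneousComponent_coordinates, hc d _ (hcoord w hw)]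

theorem extendsToBall_of_extendsAlongLine_axis {p : ℝ} (hp : p ^ 2 ≤ 1) (hp0 : p ≠ 0)
    (hf : AnalyticOnNhd ℝ f (sphere (0 : EuclideanSpace ℂ (Fin 2)) 1))
    (h0 : ∀ l, ExtendsAlongLine f 0 !₂[1, l])
    (h : ∀ l, ExtendsAlongLine f !₂[(p : ℂ), 0] !₂[1, l]) : ExtendsToBall f := by
  have hzero : !₂[((0 : ℝ) : ℂ), 0] = (0 : EuclideanSpace ℂ (Fin 2)) := by
    ext i
    fin_cases i <;> simp
  exact (ChordMomentsVanish.jetMomentsVanish (analyticOnNhd_comp_coordinates hf) hp hp0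
    (fun ψ l => ExtendsAlongLine.chordMoment_eq_zero (by norm_num) (hzero ▸ h0 l) ψ)
    fun ψ l => (h l).chordMoment_eq_zero hp ψ).extendsToBall hf

theorem extendsToBall_of_extendsAlongLine_one
    (hf : AnalyticOnNhd ℝ f (sphere (0 : EuclideanSpace ℂ (Fin 2)) 1))
    (h : ∀ l, ExtendsAlongLine f !₂[1, 0] !₂[1, l]) : ExtendsToBall f :=
  (ChordMomentsVanish.jetMomentsVanish_of_one (analyticOnNhd_comp_coordinates hf)
    fun ψ l => ExtendsAlongLine.chordMoment_eq_zero (by norm_num) (by simpa using h l) ψ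
    ).extendsToBall hf

end ExtensionInCoordinates

section BallInvolution

open ComplexInnerProductSpace

variable {E : Type*} [NormedAddCommGroup E]

theorem ofReal_sqrt_one_sub_norm_sq {a : E} (ha : ‖a‖ < 1) :
    (√(1 - ‖a‖ ^ 2) : ℂ) ^ 2 = 1 - (‖a‖ : ℂ) ^ 2 := by
  norm_cast
  exact Real.sq_sqrt (sub_nonneg.2 (pow_le_one₀ (norm_nonneg a) ha.le))

theorem sqrt_one_sub_norm_sq_ne_zero {a : E} (ha : ‖a‖ < 1) : √(1 - ‖a‖ ^ 2) ≠ 0 :=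
  (Real.sqrt_pos.2 (sub_pos.2 (pow_lt_one₀ (norm_nonneg a) ha two_ne_zero))).ne'

theorem one_add_ofReal_sqrt_ne_zero (x : ℝ) : (1 + √x : ℂ) ≠ 0 := by
  exact_mod_cast (add_pos_of_pos_of_nonneg one_pos (Real.sqrt_nonneg x)).ne'

variable [InnerProductSpace ℂ E] {a z c v : E}

theorem inner_self_eq_ofReal_norm_sq (a : E) : ⟪a, a⟫ = (‖a‖ : ℂ) ^ 2 :=
  inner_self_eq_norm_sq_to_K a

/-- The linear map that fixes `a` and multiplies its orthogonal complement by `√(1 - ‖a‖ ^ 2)`. -/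
noncomputable def orthogonalShrink (a : E) : E →L[ℂ] E :=
  (√(1 - ‖a‖ ^ 2) : ℂ) • .id ℂ E + (1 + √(1 - ‖a‖ ^ 2) : ℂ)⁻¹ • (innerSL ℂ a).smulRight a

/-- The holomorphic involution of the unit ball that exchanges `a` and the origin. -/
noncomputable def ballInvolution (a z : E) : E :=
  (1 - ⟪a, z⟫)⁻¹ • (a - orthogonalShrink a z)

theorem orthogonalShrink_apply (a z : E) :
    orthogonalShrink a z =
      (√(1 - ‖a‖ ^ 2) : ℂ) • z + ((1 + √(1 - ‖a‖ ^ 2) : ℂ)⁻¹ * ⟪a, z⟫) • a := by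
  simp [orthogonalShrink, smul_smul]

theorem inner_orthogonalShrink (ha : ‖a‖ < 1) (z : E) : ⟪a, orthogonalShrink a z⟫ = ⟪a, z⟫ := by
  have hs := ofReal_sqrt_one_sub_norm_sq ha
  have hs1 := one_add_ofReal_sqrt_ne_zero (1 - ‖a‖ ^ 2)
  rw [orthogonalShrink_apply, inner_add_right, inner_smul_right, inner_smul_right,
    inner_self_eq_ofReal_norm_sq]
  field_simp
  linear_combination ⟪a, z⟫ * hs

theorem orthogonalShrink_self (ha : ‖a‖ < 1) : orthogonalShrink a a = a := by
  have hs := ofReal_sqrt_one_sub_norm_sq ha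
  have hs1 := one_add_ofReal_sqrt_ne_zero (1 - ‖a‖ ^ 2)
  rw [orthogonalShrink_apply, ← add_smul, inner_self_eq_ofReal_norm_sq]
  convert one_smul ℂ a
  field_simp
  linear_combination hs

theorem orthogonalShrink_orthogonalShrink (ha : ‖a‖ < 1) (z : E) :
    orthogonalShrink a (orthogonalShrink a z) =
      (√(1 - ‖a‖ ^ 2) : ℂ) ^ 2 • z + ⟪a, z⟫ • a := by
  have hs1 := one_add_ofReal_sqrt_ne_zero (1 - ‖a‖ ^ 2)
  nth_rw 2 [orthogonalShrink_apply]
  rw [map_add, map_smul, map_smul, orthogonalShrink_self ha, orthogonalShrink_apply]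
  match_scalars <;> field_simp
  ring

theorem isSymmetric_orthogonalShrink (a : E) : (orthogonalShrink a).IsSymmetric := fun z w => by
  simp only [ContinuousLinearMap.coe_coe, orthogonalShrink_apply, inner_add_left, inner_add_right,
    inner_smul_left, inner_smul_right, map_mul, map_inv₀, map_add, map_one, Complex.conj_ofReal,
    inner_conj_symm]
  ring

theorem norm_orthogonalShrink_sq (ha : ‖a‖ < 1) (z : E) :
    ‖orthogonalShrink a z‖ ^ 2 = (1 - ‖a‖ ^ 2) * ‖z‖ ^ 2 + ‖⟪a, z⟫‖ ^ 2 := by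
  have hinner := isSymmetric_orthogonalShrink a z (orthogonalShrink a z)
  rw [ContinuousLinearMap.coe_coe, orthogonalShrink_orthogonalShrink ha,
    inner_self_eq_ofReal_norm_sq, inner_add_right, inner_smul_right, inner_smul_right,
    inner_self_eq_ofReal_norm_sq, ofReal_sqrt_one_sub_norm_sq ha, ← inner_conj_symm z a,
    Complex.mul_conj'] at hinner
  exact_mod_cast hinner

theorem norm_one_sub_inner_sq_sub (ha : ‖a‖ < 1) (z : E) :
    ‖1 - ⟪a, z⟫‖ ^ 2 - ‖a - orthogonalShrink a z‖ ^ 2 = (1 - ‖a‖ ^ 2) * (1 - ‖z‖ ^ 2) := by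
  have hnumerator := norm_sub_sq (𝕜 := ℂ) a (orthogonalShrink a z)
  have hdenominator := norm_sub_sq (𝕜 := ℂ) 1 ⟪a, z⟫
  rw [norm_orthogonalShrink_sq ha, inner_orthogonalShrink ha] at hnumerator
  rw [hnumerator, hdenominator, norm_one, RCLike.inner_apply, map_one, mul_one]
  ring

theorem one_sub_inner_ne_zero (ha : ‖a‖ < 1) (hz : ‖z‖ ≤ 1) : 1 - ⟪a, z⟫ ≠ 0 := by
  refine sub_ne_zero.2 fun h => (norm_inner_le_norm (𝕜 := ℂ) a z).not_gt ?_
  rw [← h, norm_one]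
  exact (mul_le_of_le_one_right (norm_nonneg a) hz).trans_lt ha

theorem one_sub_norm_ballInvolution_sq (ha : ‖a‖ < 1) (hz : ‖z‖ ≤ 1) :
    1 - ‖ballInvolution a z‖ ^ 2 =
      (1 - ‖a‖ ^ 2) / ‖1 - ⟪a, z⟫‖ ^ 2 * (1 - ‖z‖ ^ 2) := by
  have hD := norm_ne_zero_iff.2 (one_sub_inner_ne_zero ha hz)
  have := norm_one_sub_inner_sq_sub ha z
  rw [ballInvolution, norm_smul, norm_inv]
  field_simp
  linarith

theorem one_sub_inner_ballInvolution (ha : ‖a‖ < 1) (hz : ‖z‖ ≤ 1) :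
    1 - ⟪a, ballInvolution a z⟫ = (1 - ⟪a, z⟫)⁻¹ * (√(1 - ‖a‖ ^ 2) : ℂ) ^ 2 := by
  have hD := one_sub_inner_ne_zero ha hz
  rw [ballInvolution, inner_smul_right, inner_sub_right, inner_orthogonalShrink ha,
    inner_self_eq_ofReal_norm_sq, ofReal_sqrt_one_sub_norm_sq ha]
  field_simp
  ring

theorem ballInvolution_ballInvolution (ha : ‖a‖ < 1) (hz : ‖z‖ ≤ 1) :
    ballInvolution a (ballInvolution a z) = z := by
  have hD := one_sub_inner_ne_zero ha hz
  have hs := Complex.ofReal_ne_zero.2 (sqrt_one_sub_norm_sq_ne_zero ha)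
  rw [ballInvolution, one_sub_inner_ballInvolution ha hz, ballInvolution, map_smul, map_sub,
    orthogonalShrink_self ha, orthogonalShrink_orthogonalShrink ha]
  match_scalars <;> field_simp
  ring

theorem ballInvolution_self (ha : ‖a‖ < 1) : ballInvolution a a = 0 := by
  rw [ballInvolution, orthogonalShrink_self ha, sub_self, smul_zero]

/-- The direction of the image under `ballInvolution a` of the complex line `c + ℂ v`. -/
noncomputable def ballInvolutionDirection (a c v : E) : E :=
  ⟪a, v⟫ • ballInvolution a c - orthogonalShrink a v

theorem ballInvolution_add_smul (hc : 1 - ⟪a, c⟫ ≠ 0) {t : ℂ} (ht : 1 - ⟪a, c + t • v⟫ ≠ 0) :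
    ballInvolution a (c + t • v) =
      ballInvolution a c + (t / (1 - ⟪a, c + t • v⟫)) • ballInvolutionDirection a c v := by
  simp only [ballInvolutionDirection, ballInvolution, map_add, map_smul, inner_add_right,
    inner_smul_right] at ht ⊢
  match_scalars <;> field_simp <;> ring

theorem ballInvolutionDirection_ne_zero (ha : ‖a‖ < 1) (hc : ‖c‖ ≤ 1) (hv : v ≠ 0) :
    ballInvolutionDirection a c v ≠ 0 := by
  intro hzero
  have hs := sqrt_one_sub_norm_sq_ne_zero ha
  have hinner : ⟪a, ballInvolutionDirection a c v⟫ =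
      -⟪a, v⟫ * (1 - ⟪a, ballInvolution a c⟫) := by
    rw [ballInvolutionDirection, inner_sub_right, inner_smul_right, inner_orthogonalShrink ha]
    ring
  have hav : ⟪a, v⟫ = 0 := by
    simpa [hzero, one_sub_inner_ballInvolution ha hc, one_sub_inner_ne_zero ha hc, hs] using hinner
  simp [ballInvolutionDirection, orthogonalShrink_apply, hav, hs, hv] at hzero

end BallInvolution

section BallAutomorphisms

open ComplexInnerProductSpace

theorem ExtendsToBall.comp {E E' : Type*} [NormedAddCommGroup E] [NormedSpace ℂ E]
    [NormedAddCommGroup E'] [NormedSpace ℂ E'] {f : E' → ℂ} {φ : E → E'} (h : ExtendsToBall f)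
    (hdiff : ∀ z ∈ closedBall (0 : E) 1, DifferentiableAt ℂ φ z)
    (hball : MapsTo φ (ball 0 1) (ball 0 1)) (hsphere : MapsTo φ (sphere 0 1) (sphere 0 1)) :
    ExtendsToBall (f ∘ φ) := by
  obtain ⟨F, hF, hF', hFf⟩ := h
  have hclosed : MapsTo φ (closedBall 0 1) (closedBall 0 1) := by
    simpa only [ball_union_sphere] using hball.union_union hsphere
  exact ⟨F ∘ φ, hF.comp (fun z hz => (hdiff z hz).continuousAt.continuousWithinAt) hclosed,
    hF'.comp (fun z hz => (hdiff z (ball_subset_closedBall hz)).differentiableWithinAt) hball,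
    hFf.comp_right hsphere⟩

theorem ExtendsToBall.congr {E : Type*} [NormedAddCommGroup E] [NormedSpace ℂ E] {f g : E → ℂ}
    (h : ExtendsToBall f) (hfg : EqOn f g (sphere 0 1)) : ExtendsToBall g :=
  h.imp fun _ hF => ⟨hF.1, hF.2.1, hF.2.2.trans hfg⟩

theorem ExtendsAlongLine.congr {E : Type*} [NormedAddCommGroup E] [NormedSpace ℂ E] {f g : E → ℂ}
    {c v : E} (h : ExtendsAlongLine f c v) (hfg : EqOn f g (sphere 0 1)) :
    ExtendsAlongLine g c v :=
  h.imp fun _ hF => ⟨hF.1, hF.2.1, fun t ht =>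
    (hF.2.2 t ht).trans (hfg (mem_sphere_zero_iff_norm.2 ht))⟩

variable {E E' : Type*} [NormedAddCommGroup E] [InnerProductSpace ℂ E] [NormedAddCommGroup E']
  [InnerProductSpace ℂ E'] {a c v : E}

theorem analyticOnNhd_comp_linearIsometryEquiv {f : E' → ℂ}
    (hf : AnalyticOnNhd ℝ f (sphere 0 1)) (U : E ≃ₗᵢ[ℂ] E') :
    AnalyticOnNhd ℝ (f ∘ U) (sphere 0 1) :=
  hf.comp (fun z _ => (U.toContinuousLinearEquiv.analyticAt z).restrictScalars)
    fun z hz => by simpa using hz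

theorem ExtendsAlongLine.comp_linearIsometryEquiv {f : E' → ℂ} (U : E ≃ₗᵢ[ℂ] E')
    (h : ExtendsAlongLine f (U c) (U v)) : ExtendsAlongLine (f ∘ U) c v := by
  simpa only [ExtendsAlongLine, ← map_smul, ← map_add, U.norm_map, Function.comp_apply] using h

theorem ExtendsToBall.of_comp_linearIsometryEquiv {f : E' → ℂ} (U : E ≃ₗᵢ[ℂ] E')
    (h : ExtendsToBall (f ∘ U)) : ExtendsToBall f := by
  refine (h.comp (φ := U.symm) (fun z _ => U.symm.toContinuousLinearEquiv.differentiableAt)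
    (fun z hz => by simpa using hz) (fun z hz => by simpa using hz)).congr fun z _ => ?_
  simp

theorem norm_ballInvolution_lt_one_iff (ha : ‖a‖ < 1) (hc : ‖c‖ ≤ 1) :
    ‖ballInvolution a c‖ < 1 ↔ ‖c‖ < 1 := by
  have hfactor : 0 < (1 - ‖a‖ ^ 2) / ‖1 - ⟪a, c⟫‖ ^ 2 :=
    div_pos (sub_pos.2 (pow_lt_one₀ (norm_nonneg a) ha two_ne_zero))
      (pow_pos (norm_pos_iff.2 (one_sub_inner_ne_zero ha hc)) 2)
  rw [← sq_lt_one_iff₀ (norm_nonneg _), ← sub_pos, one_sub_norm_ballInvolution_sq ha hc,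
    mul_pos_iff_of_pos_left hfactor, sub_pos, sq_lt_one_iff₀ (norm_nonneg _)]

theorem norm_ballInvolution_eq_one (ha : ‖a‖ < 1) (hc : ‖c‖ = 1) : ‖ballInvolution a c‖ = 1 := by
  have := one_sub_norm_ballInvolution_sq ha hc.le
  rw [hc, one_pow, sub_self, mul_zero, sub_eq_zero] at this
  exact (pow_eq_one_iff_of_nonneg (norm_nonneg _) two_ne_zero).1 this.symm

theorem norm_ballInvolution_le_one (ha : ‖a‖ < 1) (hc : ‖c‖ ≤ 1) : ‖ballInvolution a c‖ ≤ 1 :=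
  hc.lt_or_eq.elim (fun h => ((norm_ballInvolution_lt_one_iff ha hc).2 h).le)
    fun h => (norm_ballInvolution_eq_one ha h).le

theorem analyticAt_ballInvolution (ha : ‖a‖ < 1) (hc : ‖c‖ ≤ 1) :
    AnalyticAt ℂ (ballInvolution a) c :=
  ((analyticAt_const.sub ((innerSL ℂ a).analyticAt c)).inv (one_sub_inner_ne_zero ha hc)).smul
    (analyticAt_const.sub ((orthogonalShrink a).analyticAt c))

theorem analyticOnNhd_comp_ballInvolution {f : E → ℂ} (ha : ‖a‖ < 1)
    (hf : AnalyticOnNhd ℝ f (sphere 0 1)) :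
    AnalyticOnNhd ℝ (f ∘ ballInvolution a) (sphere 0 1) :=
  hf.comp (fun _ hz => (analyticAt_ballInvolution ha
    (mem_sphere_zero_iff_norm.1 hz).le).restrictScalars) fun _ hz =>
      mem_sphere_zero_iff_norm.2 (norm_ballInvolution_eq_one ha (mem_sphere_zero_iff_norm.1 hz))

theorem ExtendsAlongLine.comp_ballInvolution {f : E → ℂ} (ha : ‖a‖ < 1) (hc : ‖c‖ ≤ 1)
    (h : ExtendsAlongLine f (ballInvolution a c) (ballInvolutionDirection a c v)) :
    ExtendsAlongLine (f ∘ ballInvolution a) c v := by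
  obtain ⟨F, hF, hF', hFf⟩ := h
  have hparam {t : ℂ} (ht : ‖c + t • v‖ ≤ 1) := ballInvolution_add_smul
    (one_sub_inner_ne_zero ha hc) (one_sub_inner_ne_zero ha ht)
  have hdiff : DifferentiableOn ℂ (fun t : ℂ => t / (1 - ⟪a, c + t • v⟫))
      {t : ℂ | ‖c + t • v‖ ≤ 1} := by
    simp only [inner_add_right, inner_smul_right]
    refine differentiableOn_id.div (by fun_prop) fun t ht => ?_
    simpa only [inner_add_right, inner_smul_right] using one_sub_inner_ne_zero ha ht
  refine ⟨fun t => F (t / (1 - ⟪a, c + t • v⟫)), hF.comp hdiff.continuousOn fun t ht => ?_,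
    hF'.comp (hdiff.mono fun t => le_of_lt (a := ‖c + t • v‖)) fun t ht => ?_, fun t ht => ?_⟩
  · rw [mem_ofPred_eq, ← hparam ht]
    exact norm_ballInvolution_le_one ha ht
  · rw [mem_ofPred_eq, ← hparam (le_of_lt ht)]
    exact (norm_ballInvolution_lt_one_iff ha (le_of_lt ht)).2 ht
  · rw [Function.comp_apply, hparam ht.le]
    exact hFf _ (hparam ht.le ▸ norm_ballInvolution_eq_one ha ht)

theorem ExtendsToBall.of_comp_ballInvolution {f : E → ℂ} (ha : ‖a‖ < 1)
    (h : ExtendsToBall (f ∘ ballInvolution a)) : ExtendsToBall f := by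
  refine (h.comp (φ := ballInvolution a) (fun z hz => (analyticAt_ballInvolution ha
    (mem_closedBall_zero_iff.1 hz)).differentiableAt) (fun z hz => ?_) (fun z hz => ?_)).congr
      fun z hz => ?_
  · rw [mem_ball_zero_iff] at hz ⊢
    exact (norm_ballInvolution_lt_one_iff ha hz.le).2 hz
  · rw [mem_sphere_zero_iff_norm] at hz ⊢
    exact norm_ballInvolution_eq_one ha hz
  · rw [Function.comp_apply, Function.comp_apply, ballInvolution_ballInvolution ha
      (mem_sphere_zero_iff_norm.1 hz).le]

end BallAutomorphisms

section Normalization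

open Module

variable {E : Type*} [NormedAddCommGroup E] [InnerProductSpace ℂ E] {f : E → ℂ} {a b : E}

theorem exists_linearIsometryEquiv_coordinates (hE : finrank ℂ E = 2) (hb : b ≠ 0) :
    ∃ U : EuclideanSpace ℂ (Fin 2) ≃ₗᵢ[ℂ] E, U !₂[(‖b‖ : ℂ), 0] = b := by
  have hunit : Orthonormal ℂ (({0} : Set (Fin 2)).domRestrict fun _ => (‖b‖ : ℂ)⁻¹ • b) := by
    refine orthonormal_subsingleton_iff.2 fun _ => ?_
    simp [norm_smul, hb]
  have := FiniteDimensional.of_finrank_pos (K := ℂ) (V := E) (by lia)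
  obtain ⟨e, he⟩ := hunit.exists_orthonormalBasis_extension_of_card_eq (by simpa using hE)
  refine ⟨e.repr.symm, ?_⟩
  rw [← e.sum_repr_symm, Fin.sum_univ_two]
  simp [he 0 rfl, hb]

theorem vec_one_ne_zero (l : ℂ) : (!₂[1, l] : EuclideanSpace ℂ (Fin 2)) ≠ 0 := fun h =>
  one_ne_zero (congrArg (fun w : EuclideanSpace ℂ (Fin 2) => w 0) h)

theorem extendsToBall_of_extendsAlongLine_mem_sphere (hE : finrank ℂ E = 2)
    (hf : AnalyticOnNhd ℝ f (sphere 0 1)) (ha : a ∈ sphere (0 : E) 1)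
    (h : ∀ v ≠ 0, ExtendsAlongLine f a v) : ExtendsToBall f := by
  obtain ⟨U, hU⟩ := exists_linearIsometryEquiv_coordinates hE
    (ne_zero_of_mem_unit_sphere ⟨a, ha⟩)
  rw [mem_sphere_zero_iff_norm.1 ha, Complex.ofReal_one] at hU
  exact .of_comp_linearIsometryEquiv U (extendsToBall_of_extendsAlongLine_one
    (analyticOnNhd_comp_linearIsometryEquiv hf U) fun l => .comp_linearIsometryEquiv U
      (hU ▸ h _ (U.map_ne_zero_iff.2 (vec_one_ne_zero l))))

theorem extendsToBall_of_extendsAlongLine_zero (hE : finrank ℂ E = 2)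
    (hf : AnalyticOnNhd ℝ f (sphere 0 1)) (hb : b ∈ closedBall (0 : E) 1) (hb0 : b ≠ 0)
    (h0 : ∀ v ≠ 0, ExtendsAlongLine f 0 v) (h : ∀ v ≠ 0, ExtendsAlongLine f b v) :
    ExtendsToBall f := by
  obtain ⟨U, hU⟩ := exists_linearIsometryEquiv_coordinates hE hb0
  have hne (l : ℂ) : U !₂[1, l] ≠ 0 := U.map_ne_zero_iff.2 (vec_one_ne_zero l)
  exact .of_comp_linearIsometryEquiv U (extendsToBall_of_extendsAlongLine_axis
    (pow_le_one₀ (norm_nonneg b) (mem_closedBall_zero_iff.1 hb)) (norm_ne_zero_iff.2 hb0)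
    (analyticOnNhd_comp_linearIsometryEquiv hf U)
    (fun l => .comp_linearIsometryEquiv U ((map_zero U).symm ▸ h0 _ (hne l)))
    fun l => .comp_linearIsometryEquiv U (hU.symm ▸ h _ (hne l)))

theorem extendsToBall_of_extendsAlongLine_mem_ball (hE : finrank ℂ E = 2)
    (hf : AnalyticOnNhd ℝ f (sphere 0 1)) (ha : ‖a‖ < 1) (hb : ‖b‖ ≤ 1) (hab : a ≠ b)
    (hfa : ∀ v ≠ 0, ExtendsAlongLine f a v) (hfb : ∀ v ≠ 0, ExtendsAlongLine f b v) :
    ExtendsToBall f := by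
  have hzero : ballInvolution a 0 = a := by
    rw [← ballInvolution_self ha, ballInvolution_ballInvolution ha ha.le]
  have hb' : ballInvolution a (ballInvolution a b) = b := ballInvolution_ballInvolution ha hb
  have hne : ballInvolution a b ≠ 0 := fun h => hab (by rw [← hb', h, hzero])
  have hnorm := norm_ballInvolution_le_one ha hb
  refine .of_comp_ballInvolution ha (extendsToBall_of_extendsAlongLine_zero hE
    (analyticOnNhd_comp_ballInvolution ha hf) (mem_closedBall_zero_iff.2 hnorm) hne
    (fun v hv => .comp_ballInvolution ha (by simp) ?_)
    fun v hv => .comp_ballInvolution ha hnorm ?_)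
  · rw [hzero]
    exact hfa _ (ballInvolutionDirection_ne_zero ha (by simp) hv)
  · rw [hb']
    exact hfb _ (ballInvolutionDirection_ne_zero ha hnorm hv)

end Normalization

/-- **Theorem (main).** Let `a, b` be two distinct points of the closed unit
ball of `ℂ²`.  If `f` is a real-analytic function on the unit sphere (i.e. the restriction to
the sphere of a function real-analytic in a neighborhood of the sphere) which, on every
complex line `L` through `a` or through `b`, agrees on `L ∩ ∂B²` with a function continuous
on `L ∩ cl B²` and holomorphic on `L ∩ B²`, then `f` is the boundary value of a function
continuous on the closed ball and holomorphic in the open ball. -/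
theorem holomorphic_extension_from_two_bunches_dim_two
    
    (a b : EuclideanSpace ℂ (Fin 2))
    (ha : a ∈ closedBall (0 : EuclideanSpace ℂ (Fin 2)) 1)
    (hb : b ∈ closedBall (0 : EuclideanSpace ℂ (Fin 2)) 1)
    (hab : a ≠ b)
    (f : EuclideanSpace ℂ (Fin 2) → ℂ)
    -- `f` is real-analytic on the sphere: it is the restriction of a function
    -- real-analytic in a neighborhood of the sphere
    (hf : ∃ (U : Set (EuclideanSpace ℂ (Fin 2))) (g : EuclideanSpace ℂ (Fin 2) → ℂ),
      IsOpen U ∧ sphere (0 : EuclideanSpace ℂ (Fin 2)) 1 ⊆ U ∧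
      AnalyticOnNhd ℝ g U ∧ EqOn f g (sphere (0 : EuclideanSpace ℂ (Fin 2)) 1))
    -- one-dimensional holomorphic extension along every complex line through `a` or `b`
    (hext : ∀ c ∈ ({a, b} : Set (EuclideanSpace ℂ (Fin 2))),
      ∀ v : EuclideanSpace ℂ (Fin 2), v ≠ 0 →
      ∃ F : ℂ → ℂ,
        ContinuousOn F {t : ℂ | ‖c + t • v‖ ≤ 1} ∧
        DifferentiableOn ℂ F {t : ℂ | ‖c + t • v‖ < 1} ∧
        ∀ t : ℂ, ‖c + t • v‖ = 1 → F t = f (c + t • v)) :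
    ∃ F : EuclideanSpace ℂ (Fin 2) → ℂ,
      ContinuousOn F (closedBall (0 : EuclideanSpace ℂ (Fin 2)) 1) ∧
      DifferentiableOn ℂ F (ball (0 : EuclideanSpace ℂ (Fin 2)) 1) ∧
      EqOn F f (sphere (0 : EuclideanSpace ℂ (Fin 2)) 1) := by
  obtain ⟨U, g, -, hU, hgU, hfg⟩ := hf
  have hg : AnalyticOnNhd ℝ g (sphere 0 1) := hgU.mono hU
  have hline : ∀ c ∈ ({a, b} : Set (EuclideanSpace ℂ (Fin 2))), ∀ v ≠ 0, ExtendsAlongLine g c v :=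
    fun c hc v hv => ExtendsAlongLine.congr (hext c hc v hv) hfg
  have hdim : Module.finrank ℂ (EuclideanSpace ℂ (Fin 2)) = 2 := finrank_euclideanSpace_fin
  suffices ExtendsToBall g from this.congr hfg.symm
  rw [mem_closedBall_zero_iff] at ha hb
  rcases ha.lt_or_eq with ha_interior | ha_boundary
  · exact extendsToBall_of_extendsAlongLine_mem_ball hdim hg ha_interior hb hab
      (hline a (by simp)) (hline b (by simp))
  · exact extendsToBall_of_extendsAlongLine_mem_sphere hdim hg
      (mem_sphere_zero_iff_norm.2 ha_boundary) (hline a (by simp))
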